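/- Θ^N_{2n} is a cocycle in the relative Lie algebra cochain complex C^{2n}(gl_N(A^pol_{2n}), gl_N ⊕ sp_{2n}; gl_N(A^pol_{2n})^*): it is invariant under the adjoint action of gl_N ⊕ sp_{2n}, vanishes whenever one of its 2n arguments lies in gl_N ⊕ sp_{2n}, satisfies d_Lie Θ^N_{2n} = 0, and its cohomology class is nonzero; moreover Θ^N_{2n}((Id_N⊗p_1)∧(Id_N⊗q_1)∧⋯∧(Id_N⊗p_n)∧(Id_N⊗q_n))(Id_N⊗1) = N. -/

import Mathlib

noncomputable section
open MvPolynomial MeasureTheory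

/-- The ground ring `K = ℂ[ε,ε⁻¹]` of Laurent polynomials in `ε`. -/
abbrev Kc : Type := LaurentPolynomial ℂ

/-- The element `ε ∈ K`. -/
def eps : Kc := LaurentPolynomial.T 1

/-- The underlying space of the polynomial Weyl algebra `A^pol_{2n}`:
polynomials in the variables `y_1, …, y_{2n}` (with `y_{2r-1} = p_r`, `y_{2r} = q_r`,
`0`-indexed below) over `K`. -/
abbrev Apol (n : ℕ) : Type := MvPolynomial (Fin (2*n)) Kc

/-- The `k`-fold tensor power `A^{⊗k}` of `A = A^pol_{2n}` over `K`, realized as the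
polynomial ring in `k` groups of `2n` variables. -/
abbrev Tens (n k : ℕ) : Type := MvPolynomial (Fin k × Fin (2*n)) Kc

/-- index of `p_r` among the variables `y` (0-indexed). -/
def pVar (n : ℕ) (r : Fin n) : Fin (2*n) := ⟨2*r.1, by have := r.2; omega⟩
/-- index of `q_r` among the variables `y` (0-indexed). -/
def qVar (n : ℕ) (r : Fin n) : Fin (2*n) := ⟨2*r.1+1, by have := r.2; omega⟩

/-- Partial derivative in the variable `y_v` of the `i`-th tensor factor, as a `K`-linear
endomorphism of `A^{⊗k}`. -/
def Dop (n k : ℕ) (i : Fin k) (v : Fin (2*n)) : Module.End Kc (Tens n k) :=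
  (pderiv (i, v)).toLinearMap

/-- The operator `α_{ij}` on `A^{⊗k}`:
`α_{ij} = (1/2) ∑_r (∂_{p_r}⊗∂_{q_r} − ∂_{q_r}⊗∂_{p_r})` acting on factors `i` and `j`.
By construction `α_{ji} = −α_{ij}`. -/
def alphaOp (n k : ℕ) (i j : Fin k) : Module.End Kc (Tens n k) :=
  algebraMap ℂ Kc (1/2) • ∑ r : Fin n,
    (Dop n k i (pVar n r) * Dop n k j (qVar n r) - Dop n k i (qVar n r) * Dop n k j (pVar n r))

/-- The operator `π_{2n}` on `A^{⊗(2n+1)}`: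
`π_{2n}(a_0⊗⋯⊗a_{2n}) = ∑_{σ∈S_{2n}} sign(σ) a_0⊗∂_{y_{σ(1)}}a_1⊗⋯⊗∂_{y_{σ(2n)}}a_{2n}`. -/
def piOp (n : ℕ) : Module.End Kc (Tens n (2*n+1)) :=
  ∑ σ : Equiv.Perm (Fin (2*n)),
    (Equiv.Perm.sign σ : ℤ) •
      (List.ofFn (fun m : Fin (2*n) => Dop n (2*n+1) m.succ (σ m))).prod

/-- Pairs `i < j` in `Fin m`. -/
abbrev Pairs (m : ℕ) : Type := {p : Fin m × Fin m // p.1 < p.2}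

/-- The simplex `Δ_m = {0 ≤ u_1 ≤ ⋯ ≤ u_m ≤ 1}` in `ℝ^m`. -/
def simplexSet (m : ℕ) : Set (Fin m → ℝ) :=
  {u | (∀ i, 0 ≤ u i ∧ u i ≤ 1) ∧ ∀ i j : Fin m, i ≤ j → u i ≤ u j}

/-- Extension of `u : ℝ^m` to `ℝ^{m+1}` by the convention `u_0 = 0`. -/
def cons0 (m : ℕ) (u : Fin m → ℝ) : Fin (m+1) → ℝ := Fin.cons 0 u

/-- The (commuting) product `∏_{i<j} α_{ij}^{K(i,j)}`. -/
def alphaPowProd (n k : ℕ) (K : Pairs k → ℕ) : Module.End Kc (Tens n k) :=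
  (Finset.univ.toList.map (fun p : Pairs k => alphaOp n k p.1.1 p.1.2 ^ (K p))).prod

/-- The Hochschild cochain `τ_{2n} : A^{⊗(2n+1)} → K`,
`τ_{2n}(a) = μ_{2n} ∫_{Δ_{2n}} ∏_{0≤i<j≤2n} e^{ε(2u_i−2u_j+1)α_{ij}} π_{2n}(a) du`,
with the exponentials expanded as (locally finite) Taylor series and integrated term by
term; `μ` takes the product of the constant terms of the factors. -/
def tau (n : ℕ) (a : Tens n (2*n+1)) : Kc :=
  ∑ K ∈ Fintype.piFinset (fun _ : Pairs (2*n+1) => Finset.range (a.totalDegree + 1)),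
    (algebraMap ℂ Kc
        ((((∫ u in simplexSet (2*n),
            ∏ p : Pairs (2*n+1),
              (2 * cons0 (2*n) u p.1.1 - 2 * cons0 (2*n) u p.1.2 + 1) ^ (K p)) : ℝ) : ℂ)
          * (∏ p : Pairs (2*n+1), ((K p).factorial : ℂ))⁻¹)
        * eps ^ (∑ p : Pairs (2*n+1), K p)) •
      constantCoeff (alphaPowProd n (2*n+1) K (piOp n a))

/-- The embedding of `A` as the `i`-th tensor factor of `A^{⊗k}`. -/
def embA (n k : ℕ) (i : Fin k) : Apol n →ₐ[Kc] Tens n k :=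
  rename (fun v => (i, v))

/-- The elementary tensor `a_0 ⊗ ⋯ ⊗ a_{k-1} ∈ A^{⊗k}`. -/
def elemT {n k : ℕ} (a : Fin k → Apol n) : Tens n k :=
  ∏ i : Fin k, embA n k i (a i)

/-- `exp(ε f)` applied to `a`, for a locally nilpotent operator `f` that strictly decreases
total degree (so that the series is finite on every argument). -/
def expEps {n k : ℕ} (f : Module.End Kc (Tens n k)) (a : Tens n k) : Tens n k :=
  ∑ m ∈ Finset.range (a.totalDegree + 1),
    (algebraMap ℂ Kc ((m.factorial : ℂ)⁻¹) * eps ^ m) • (f ^ m) a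

/-- The Moyal star product `f ⋆ g = m(exp(εα)(f⊗g))` on `A^pol_{2n}`. -/
def moyal (n : ℕ) (f g : Apol n) : Apol n :=
  aeval (fun v : Fin 2 × Fin (2*n) => (X v.2 : Apol n))
    (expEps (alphaOp n 2 0 1) (elemT ![f, g]))

/-- The bracket `[f,g]_ε = (1/ε)(f⋆g − g⋆f)`. -/
def brkt (n : ℕ) (f g : Apol n) : Apol n :=
  (LaurentPolynomial.T (-1) : Kc) • (moyal n f g - moyal n g f)

/-- `sp_{2n}`, identified with the space of homogeneous quadratic polynomials in the `y`'s
with complex coefficients, as a ℂ-submodule of `A^pol_{2n}`. -/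
def spSub (n : ℕ) : Submodule ℂ (Apol n) :=
  Submodule.span ℂ {f : Apol n | ∃ i j : Fin (2*n), f = X i * X j}


/-- `gl_N(A^pol_{2n}) = M_N(ℂ) ⊗ A^pol_{2n}`, realized as `N × N` matrices over the
Weyl algebra. -/
abbrev glA (n N : ℕ) : Type := Matrix (Fin N) (Fin N) (Apol n)

/-- Matrix multiplication over the Weyl algebra (entrywise Moyal products). -/
def matMul (n N : ℕ) (Z W : glA n N) : glA n N :=
  fun i j => ∑ l : Fin N, moyal n (Z i l) (W l j)

/-- The Lie bracket `(1/ε)(ZW − WZ)` on `gl_N(A^pol_{2n})`. -/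
def glBr (n N : ℕ) (Z W : glA n N) : glA n N :=
  (LaurentPolynomial.T (-1) : Kc) • (matMul n N Z W - matMul n N W Z)

/-- Generators of the subalgebra `h = gl_N ⊕ sp_{2n}`: scalar-matrix elements `M ⊗ 1`
and central quadratic elements `1 ⊗ a`, `a ∈ sp_{2n}`. -/
def hSet (n N : ℕ) : Set (glA n N) :=
  {Z | (∃ M : Matrix (Fin N) (Fin N) ℂ, Z = M.map (algebraMap ℂ (Apol n))) ∨
       (∃ a : Apol n, a ∈ spSub n ∧ Z = Matrix.diagonal (fun _ => a))}

/-- The subalgebra `gl_N ⊕ sp_{2n} ⊂ gl_N(A^pol_{2n})` (its `K`-span). -/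
def hK (n N : ℕ) : Submodule Kc (glA n N) := Submodule.span Kc (hSet n N)

/-- The Lie cochain `φ^N(T)` associated with a Hochschild cochain `T`:
`φ^N(T)(M_1⊗a_1,…,M_k⊗a_k)(M_0⊗a_0) = ∑_{σ∈S_k} sign(σ)
τ(a_0⊗a_{σ(1)}⊗⋯⊗a_{σ(k)}) tr(M_0M_{σ(1)}⋯M_{σ(k)})`, written for general matrices
over `A` by chaining matrix indices through the trace. -/
def phiN (n N k : ℕ) (T : Tens n (k+1) → Kc) (Xs : Fin k → glA n N) (w : glA n N) : Kc :=
  ∑ σ : Equiv.Perm (Fin k), (Equiv.Perm.sign σ : ℤ) •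
    ∑ idx : Fin (k+1) → Fin N,
      T (elemT (Fin.cons (w (idx 0) (idx 1))
        (fun m : Fin k => (Xs (σ m)) (idx m.succ) (idx (m.succ + 1)))))

/-- The Lie cochain `Θ^N_{2n} = φ^N(τ_{2n})`. -/
def Theta (n N : ℕ) (v : Fin (2*n) → glA n N) (w : glA n N) : Kc :=
  phiN n N (2*n) (tau n) v w

/-- The tuple `([v_i,v_j], v_0, …, v̂_i, …, v̂_j, …, v_d)` (`i < j`) used in the
Chevalley–Eilenberg differential. -/
def pairTuple {G : Type*} (d : ℕ) (v : Fin (d+1) → G) (br : G) (i j : Fin (d+1)) :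
    Fin d → G :=
  fun m =>
    if hm : m.1 = 0 then br
    else if h1 : m.1 - 1 < i.1 then v ⟨m.1 - 1, by have := i.2; omega⟩
    else if h2 : m.1 < j.1 then v ⟨m.1, by have := j.2; omega⟩
    else v ⟨m.1 + 1, by have := m.2; omega⟩

/-- The Chevalley–Eilenberg differential on cochains with values in the coadjoint module
`gl_N(A)^*`, `(x·ξ)(y) = −ξ([x,y])`. -/
def dCoadj (n N k : ℕ) (c : (Fin k → glA n N) → glA n N → Kc) :
    (Fin (k+1) → glA n N) → glA n N → Kc :=
  fun v w =>
    (∑ i : Fin (k+1), (-1:Kc)^(i.1+1) • c (v ∘ i.succAbove) (glBr n N (v i) w))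
    + ∑ i : Fin (k+1), ∑ l : Fin (k+1),
        (if i < l then (-1:Kc)^(i.1+l.1) • c (pairTuple k v (glBr n N (v i) (v l)) i l) w
         else 0)

/-- A relative cochain of the pair `(gl_N(A), gl_N ⊕ sp_{2n})` with values in the coadjoint
module: `K`-multilinear and alternating in the wedge arguments, `K`-linear in the module
argument, vanishing if a wedge argument lies in `h`, and `h`-invariant. -/
def IsRelCoadjCochain (n N k : ℕ) (c : (Fin k → glA n N) → glA n N → Kc) : Prop :=
  (∀ (v : Fin k → glA n N) (i : Fin k) (x y : glA n N) (w : glA n N),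
      c (Function.update v i (x + y)) w
        = c (Function.update v i x) w + c (Function.update v i y) w) ∧
  (∀ (v : Fin k → glA n N) (i : Fin k) (s : Kc) (x : glA n N) (w : glA n N),
      c (Function.update v i (s • x)) w = s * c (Function.update v i x) w) ∧
  (∀ (v : Fin k → glA n N) (x y : glA n N), c v (x + y) = c v x + c v y) ∧
  (∀ (v : Fin k → glA n N) (s : Kc) (x : glA n N), c v (s • x) = s * c v x) ∧
  (∀ (v : Fin k → glA n N) (i j : Fin k) (w : glA n N), i ≠ j → v i = v j → c v w = 0) ∧
  (∀ (v : Fin k → glA n N) (i : Fin k) (w : glA n N), v i ∈ hK n N → c v w = 0) ∧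
  (∀ Z ∈ hK n N, ∀ (v : Fin k → glA n N) (w : glA n N),
      (∑ i : Fin k, c (Function.update v i (glBr n N Z (v i))) w) + c v (glBr n N Z w) = 0)

/-- `c` is the coboundary of a relative cochain (with coadjoint coefficients). -/
def IsRelCoadjCobd (n N : ℕ) : (k : ℕ) → ((Fin k → glA n N) → glA n N → Kc) → Prop
  | 0, c => c = 0
  | (m+1), c => ∃ b, IsRelCoadjCochain n N m b ∧ c = dCoadj n N m b

/-! Write `ω` for the constant Poisson tensor on covectors. The cochain `τ` is the constant term of
a differential operator applied to its argument; the symbol of the coefficient of `ε ^ m` in this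
operator is `D · J_m`, where `D` is the determinant of the covectors `x_1, …, x_{2n}`, and `J_m` is
the integral over the simplex of `W ^ m / m!` with `W = ∑_{a<b} (2u_a − 2u_b + 1) ω(x_a, x_b)`.
Since `∂W/∂u_i = 2 ω(x_i, ∑_b x_b)`, and since on the `j`-th face `W` becomes `ω(x_j, x_{j+1})` plus
the exponent of the tuple in which `x_j` and `x_{j+1}` are merged, Stokes' theorem and Laplace
expansion give a cocycle identity between symbols. Pulled back along the merging of variables it
says that `τ` is a Hochschild cocycle, and so is its extension to matrices by the trace; hence its
antisymmetrization `Θ` is a Chevalley–Eilenberg cocycle.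

`Θ` vanishes on constants because a determinant with a zero row does. On a quadratic argument, the
symbol is differentiated twice in one slot; summed over the slots with signs this leaves integrals
of the form `∫ (2s − 2u ± 1) ds` over the unit interval, which are zero. Invariance follows from
closedness and vanishing by Cartan's formula. Finally, brackets of linear elements are constants, so
relative coboundaries vanish on linear arguments paired with the unit, where `Θ` equals `N`. -/

/-! ### Stokes' theorem for polynomials on the simplex -/

section Padding

/-- The sequence `0, t₁, …, t_m, 1, 1, …`: a point of the simplex, completed by the conventions
`t₀ = 0` and `t_{m+1} = 1`. -/
def padded {B : Type*} [Zero B] [One B] {m : ℕ} (t : Fin m → B) (k : ℕ) : B :=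
  if k = 0 then 0 else if h : k - 1 < m then t ⟨k - 1, h⟩ else 1

/-- The `j`-th face map `Δ_m → Δ_{m+1}`, repeating the `j`-th term of `0, t₁, …, t_m, 1`. -/
def simplexFace {B : Type*} [Zero B] [One B] {m : ℕ} (j : ℕ) (t : Fin m → B) : Fin (m + 1) → B :=
  fun i => padded t (if i.1 < j then i.1 + 1 else i.1)

variable {B : Type*} [Zero B] [One B] {m : ℕ}

@[simp]
lemma padded_zero (t : Fin m → B) : padded t 0 = 0 := if_pos rfl

@[simp]
lemma padded_val_succ (t : Fin m → B) (k : Fin m) : padded t (k.1 + 1) = t k := by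
  simp [padded]

lemma padded_of_lt (t : Fin m → B) {k : ℕ} (hk : m < k) : padded t k = 1 := by
  rw [padded, if_neg (by omega), dif_neg (by omega)]

lemma map_padded {B' F : Type*} [Zero B'] [One B'] [FunLike F B B'] [ZeroHomClass F B B']
    [OneHomClass F B B'] (f : F) (t : Fin m → B) (k : ℕ) :
    f (padded t k) = padded (fun i => f (t i)) k := by
  unfold padded; split_ifs <;> simp

lemma padded_insertNth (i : Fin (m + 1)) (s : B) (t : Fin m → B) (k : ℕ) :
    padded (i.insertNth s t : Fin (m + 1) → B) k =
      if k ≤ i.1 then padded t k else if k = i.1 + 1 then s else padded t (k - 1) := by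
  rcases k with _ | k
  · simp
  by_cases hk : k < m + 1
  · rw [padded_val_succ _ ⟨k, hk⟩]
    rcases Fin.eq_self_or_eq_succAbove i ⟨k, hk⟩ with h | ⟨j, h⟩
    · subst h; simp
    · have hkj : k = if j.1 < i.1 then j.1 else j.1 + 1 := by
        have := congrArg Fin.val h
        simp only [Fin.succAbove, Fin.lt_def, Fin.val_castSucc] at this
        split_ifs at this ⊢ <;> simpa using this
      rw [h, Fin.insertNth_apply_succAbove, ← padded_val_succ t j]
      split_ifs at hkj ⊢ <;> first | omega | (congr 1; omega)
  · have := i.2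
    rw [padded_of_lt _ (by omega), if_neg (by omega), if_neg (by omega), padded_of_lt _ (by omega)]

lemma eq_insertNth_of_padded {x : Fin (m + 1) → B} (i : Fin (m + 1)) (s : B) (t : Fin m → B)
    (h : ∀ k : Fin (m + 1), x k =
      if k.1 < i.1 then padded t (k.1 + 1) else if k = i then s else padded t k.1) :
    x = i.insertNth s t := by
  funext k
  rw [h k, ← padded_val_succ (i.insertNth s t : Fin (m + 1) → B) k, padded_insertNth]
  simp [Fin.ext_iff]

lemma simplexFace_val_succ (i : Fin (m + 1)) (t : Fin m → B) :
    simplexFace (i.1 + 1) t = i.insertNth (padded t (i.1 + 1)) t := by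
  refine eq_insertNth_of_padded i _ t fun k => ?_
  simp only [simplexFace, Fin.ext_iff]
  split_ifs with h₁ h₂ h₂ <;> first | omega | rfl | rw [h₂]

lemma simplexFace_val (i : Fin (m + 1)) (t : Fin m → B) :
    simplexFace i.1 t = i.insertNth (padded t i.1) t := by
  refine eq_insertNth_of_padded i _ t fun k => ?_
  simp only [simplexFace, Fin.ext_iff]
  split_ifs with h₁ h₂ <;> first | omega | rfl | rw [h₂]

end Padding

section RealSimplex

variable {m : ℕ}

lemma mem_simplexSet_iff_monotone_padded {t : Fin m → ℝ} :
    t ∈ simplexSet m ↔ Monotone (padded t) := by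
  refine ⟨fun ⟨hbd, hmono⟩ a b hab => ?_, fun h => ⟨fun i => ⟨?_, ?_⟩, fun i j hij => ?_⟩⟩
  · unfold padded
    split_ifs
    all_goals first | omega | simp | skip
    · exact (hbd _).1
    · exact hmono _ _ (by simp only [Fin.mk_le_mk]; omega)
    · exact (hbd _).2
  · simpa using h (Nat.zero_le (i.1 + 1))
  · simpa [padded_of_lt t (Nat.lt_succ_self m)] using h (show i.1 + 1 ≤ m + 1 by omega)
  · simpa using h (Nat.succ_le_succ hij)

lemma insertNth_mem_simplexSet_iff {i : Fin (m + 1)} {s : ℝ} {t : Fin m → ℝ} :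
    (i.insertNth s t : Fin (m + 1) → ℝ) ∈ simplexSet (m + 1) ↔
      t ∈ simplexSet m ∧ s ∈ Set.Icc (padded t i.1) (padded t (i.1 + 1)) := by
  simp only [mem_simplexSet_iff_monotone_padded]
  have hins := padded_insertNth i s t
  constructor
  · intro h
    have hs : padded t i.1 ≤ s ∧ s ≤ padded t (i.1 + 1) := by
      have h₁ := h (Nat.le_succ i.1)
      have h₂ := h (Nat.le_succ (i.1 + 1))
      simp only [hins] at h₁ h₂
      simp_all
    refine ⟨monotone_nat_of_le_succ fun k => ?_, hs⟩
    rcases lt_trichotomy k i.1 with hk | rfl | hk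
    · simpa [hins, hk.le, Nat.succ_le_iff.2 hk] using h (Nat.le_succ k)
    · exact hs.1.trans hs.2
    · simpa [hins, hk.not_ge, hk.ne', show ¬ k + 1 ≤ i.1 by omega, show ¬ k + 1 < i.1 by omega,
        show k + 1 ≠ i.1 by omega] using h (Nat.le_succ (k + 1))
  · rintro ⟨ht, hs₁, hs₂⟩
    refine monotone_nat_of_le_succ fun k => ?_
    rw [hins, hins]
    split_ifs <;> first
      | omega
      | exact ht (by omega)
      | (obtain rfl : k = i.1 := by omega
         exact hs₁)
      | (subst_vars; exact hs₂)

lemma isCompact_simplexSet (m : ℕ) : IsCompact (simplexSet m) := by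
  refine (isCompact_univ_pi fun _ : Fin m => isCompact_Icc (a := (0 : ℝ))).of_isClosed_subset ?_
    fun u hu i _ => hu.1 i
  simp only [simplexSet, Set.ofPred_and, Set.ofPred_forall]
  exact .inter
    (isClosed_iInter fun i => (isClosed_le continuous_const (continuous_apply i)).inter
      (isClosed_le (continuous_apply i) continuous_const))
    (isClosed_iInter fun i => isClosed_iInter fun j => isClosed_iInter fun _ =>
      isClosed_le (continuous_apply i) (continuous_apply j))

lemma measurableSet_simplexSet (m : ℕ) : MeasurableSet (simplexSet m) :=
  (isCompact_simplexSet m).measurableSet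

lemma integrableOn_simplexSet {E : Type*} [NormedAddCommGroup E] {f : (Fin m → ℝ) → E}
    (hf : Continuous f) : IntegrableOn f (simplexSet m) :=
  hf.continuousOn.integrableOn_compact (isCompact_simplexSet m)

lemma continuous_padded (k : ℕ) : Continuous fun t : Fin m → ℝ => padded t k := by
  unfold padded
  split_ifs <;> fun_prop

lemma continuous_simplexFace (j : ℕ) :
    Continuous (simplexFace j : (Fin m → ℝ) → Fin (m + 1) → ℝ) :=
  continuous_pi fun _ => continuous_padded _

lemma integral_simplexSet_succ {E : Type*} [NormedAddCommGroup E] [NormedSpace ℝ E]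
    (i : Fin (m + 1)) {f : (Fin (m + 1) → ℝ) → E} (hf : Continuous f) :
    ∫ u in simplexSet (m + 1), f u =
      ∫ t in simplexSet m, ∫ s in padded t i.1..padded t (i.1 + 1), f (i.insertNth s t) := by
  let e := (MeasurableEquiv.piFinSuccAbove (fun _ : Fin (m + 1) => ℝ) i).symm
  have he : MeasurePreserving e := (volume_preserving_piFinSuccAbove (fun _ => ℝ) i).symm _
  have hint : Integrable (fun x => (simplexSet (m + 1)).indicator f (e x))
      (volume.prod volume) :=
    (he.integrable_comp_emb e.measurableEmbedding).2 <|
      (integrable_indicator_iff (measurableSet_simplexSet _)).2 (integrableOn_simplexSet hf)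
  rw [← integral_indicator (measurableSet_simplexSet _), ← he.integral_comp e.measurableEmbedding,
    ← integral_indicator (measurableSet_simplexSet _), Measure.volume_eq_prod,
    integral_prod_symm _ hint]
  congr 1 with t
  by_cases ht : t ∈ simplexSet m
  · have hslice : (fun s => (simplexSet (m + 1)).indicator f (e (s, t))) =
        (Set.Icc (padded t i.1) (padded t (i.1 + 1))).indicator fun s => f (i.insertNth s t) := by
      funext s
      change (simplexSet (m + 1)).indicator f (i.insertNth s t) = _
      simp only [Set.indicator, insertNth_mem_simplexSet_iff, ht, true_and]
    rw [Set.indicator_of_mem ht, hslice, integral_indicator measurableSet_Icc,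
      integral_Icc_eq_integral_Ioc, ← intervalIntegral.integral_of_le
        (mem_simplexSet_iff_monotone_padded.1 ht (Nat.le_succ _))]
  · have hslice (s : ℝ) : (simplexSet (m + 1)).indicator f (e (s, t)) = 0 := by
      change (simplexSet (m + 1)).indicator f (i.insertNth s t) = _
      simp only [Set.indicator, insertNth_mem_simplexSet_iff, ht, false_and, if_false]
    simp [Set.indicator_of_notMem ht, hslice]

lemma hasDerivAt_eval_insertNth {𝕜 : Type*} [NontriviallyNormedField 𝕜] (i : Fin (m + 1))
    (t : Fin m → 𝕜) (p : MvPolynomial (Fin (m + 1)) 𝕜) (s : 𝕜) :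
    HasDerivAt (fun s => eval (i.insertNth s t : Fin (m + 1) → 𝕜) p)
      (eval (i.insertNth s t : Fin (m + 1) → 𝕜) (pderiv i p)) s := by
  induction p using MvPolynomial.induction_on with
  | C a => simpa using hasDerivAt_const s a
  | add p q hp hq => simp only [map_add]; exact hp.add hq
  | mul_X p j hp =>
    have hX : HasDerivAt (fun s => (i.insertNth s t : Fin (m + 1) → 𝕜) j)
        (if j = i then 1 else 0) s := by
      rcases Fin.eq_self_or_eq_succAbove i j with rfl | ⟨j, rfl⟩
      · simp only [Fin.insertNth_apply_same, if_true]
        exact hasDerivAt_id s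
      · simp only [Fin.insertNth_apply_succAbove, Fin.succAbove_ne, if_false]
        exact hasDerivAt_const s (t j)
    simp only [map_mul, eval_X]
    refine (hp.mul hX).congr_deriv ?_
    rcases eq_or_ne j i with rfl | hj
    · simp [Derivation.leibniz]; ring
    · simp [Derivation.leibniz, pderiv_X_of_ne hj, hj, mul_comm]

theorem integral_simplexSet_pderiv (i : Fin (m + 1)) (p : MvPolynomial (Fin (m + 1)) ℝ) :
    ∫ u in simplexSet (m + 1), eval u (pderiv i p) =
      (∫ t in simplexSet m, eval (simplexFace (i.1 + 1) t) p) -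
        ∫ t in simplexSet m, eval (simplexFace i.1 t) p := by
  have hface (j : ℕ) : Continuous fun t : Fin m → ℝ => eval (simplexFace j t) p :=
    p.continuous_eval.comp (continuous_simplexFace j)
  rw [integral_simplexSet_succ i (MvPolynomial.continuous_eval _),
    ← integral_sub (integrableOn_simplexSet (hface _)) (integrableOn_simplexSet (hface _))]
  congr 1 with t
  rw [intervalIntegral.integral_eq_sub_of_hasDerivAt
      (fun s _ => hasDerivAt_eval_insertNth i t p s), simplexFace_val_succ, simplexFace_val]
  exact ((MvPolynomial.continuous_eval _).comp
    (Continuous.finInsertNth i continuous_id continuous_const)).intervalIntegrable _ _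

end RealSimplex

/-- Integration over the simplex `Δ_m` of polynomials in `u₁, …, u_m` with coefficients in an
`ℝ`-algebra `L`, where no topology on `L` is needed. -/
def simplexIntegral (L : Type*) [CommRing L] [Algebra ℝ L] (m : ℕ) :
    MvPolynomial (Fin m) L →ₗ[L] L :=
  (basisMonomials (Fin m) L).constr L
    fun d => algebraMap ℝ L (∫ u in simplexSet m, eval u (monomial d (1 : ℝ)))

/-- Restriction of a polynomial on `Δ_{m+1}` to its `j`-th face. -/
def faceRestrict (L : Type*) [CommRing L] {m : ℕ} (j : ℕ) :
    MvPolynomial (Fin (m + 1)) L →ₐ[L] MvPolynomial (Fin m) L :=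
  aeval (simplexFace j (X : Fin m → MvPolynomial (Fin m) L))

section SimplexIntegral

variable {L : Type*} [CommRing L] {m : ℕ}

@[simp]
lemma faceRestrict_C (j : ℕ) (c : L) : faceRestrict L (m := m) j (C c) = C c :=
  algHom_C _ c

lemma faceRestrict_map {L' : Type*} [CommRing L'] (f : L →+* L') (j : ℕ)
    (p : MvPolynomial (Fin (m + 1)) L) :
    faceRestrict L' j (map f p) = map f (faceRestrict L j p) := by
  induction p using MvPolynomial.induction_on with
  | C a => simp
  | add p q hp hq => simp only [map_add, hp, hq]
  | mul_X p i hp =>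
    rw [map_mul, map_mul, map_mul, map_mul, hp]
    simp [faceRestrict, simplexFace, map_padded]

lemma eval_faceRestrict (j : ℕ) (p : MvPolynomial (Fin (m + 1)) L) (u : Fin m → L) :
    eval u (faceRestrict L j p) = eval (simplexFace j u) p := by
  induction p using MvPolynomial.induction_on with
  | C a => simp
  | add p q hp hq => simp only [map_add, hp, hq]
  | mul_X p i hp => rw [map_mul, map_mul, hp]; simp [faceRestrict, simplexFace, map_padded]

variable [Algebra ℝ L]

lemma simplexIntegral_monomial (d : Fin m →₀ ℕ) (c : L) :
    simplexIntegral L m (monomial d c) =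
      c * algebraMap ℝ L (∫ u in simplexSet m, eval u (monomial d (1 : ℝ))) := by
  rw [show monomial d c = c • basisMonomials (Fin m) L d by simp [smul_monomial], map_smul,
    simplexIntegral, Module.Basis.constr_basis, smul_eq_mul]

lemma simplexIntegral_map_real (p : MvPolynomial (Fin m) ℝ) :
    simplexIntegral L m (map (algebraMap ℝ L) p) =
      algebraMap ℝ L (∫ u in simplexSet m, eval u p) := by
  induction p using MvPolynomial.induction_on' with
  | monomial d a =>
    rw [map_monomial, simplexIntegral_monomial, ← map_mul, ← integral_const_mul]
    simp [eval_monomial]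
  | add p q hp hq =>
    simp only [map_add, hp, hq]
    rw [integral_add (integrableOn_simplexSet p.continuous_eval)
      (integrableOn_simplexSet q.continuous_eval), map_add]

lemma simplexIntegral_map {L' : Type*} [CommRing L'] [Algebra ℝ L'] (f : L →ₐ[ℝ] L')
    (P : MvPolynomial (Fin m) L) :
    simplexIntegral L' m (map (f : L →+* L') P) = f (simplexIntegral L m P) := by
  induction P using MvPolynomial.induction_on' with
  | monomial d a => simp [simplexIntegral_monomial, map_monomial]
  | add p q hp hq => simp only [map_add, hp, hq]

lemma simplexIntegral_C_mul (c : L) (P : MvPolynomial (Fin m) L) :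
    simplexIntegral L m (C c * P) = c * simplexIntegral L m P := by
  rw [← smul_eq_C_mul, map_smul, smul_eq_mul]

theorem simplexIntegral_pderiv (i : Fin (m + 1)) (P : MvPolynomial (Fin (m + 1)) L) :
    simplexIntegral L (m + 1) (pderiv i P) =
      simplexIntegral L m (faceRestrict L (i.1 + 1) P) -
        simplexIntegral L m (faceRestrict L i.1 P) := by
  induction P using MvPolynomial.induction_on' with
  | monomial d a =>
    rw [show monomial d a = C a * map (algebraMap ℝ L) (monomial d (1 : ℝ)) by
      simp [C_mul_monomial], pderiv_C_mul, pderiv_map]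
    simp only [map_mul, faceRestrict_C, simplexIntegral_C_mul, faceRestrict_map,
      simplexIntegral_map_real, integral_simplexSet_pderiv, eval_faceRestrict, map_sub, mul_sub]
  | add p q hp hq => simp only [map_add, hp, hq]; ring

lemma simplexIntegral_succ_one (m : ℕ) :
    ((m + 1 : ℕ) : L) * simplexIntegral L (m + 1) 1 = simplexIntegral L m 1 := by
  have hX (i : Fin (m + 1)) : simplexIntegral L (m + 1) 1 =
      simplexIntegral L m (padded X (i.1 + 1)) - simplexIntegral L m (padded X i.1) := by
    simpa [faceRestrict, simplexFace] using simplexIntegral_pderiv (L := L) i (X i)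
  calc ((m + 1 : ℕ) : L) * simplexIntegral L (m + 1) 1
      = ∑ i : Fin (m + 1), (simplexIntegral L m (padded X (i.1 + 1)) -
          simplexIntegral L m (padded X i.1)) := by simp [← hX]
    _ = simplexIntegral L m 1 := by
      rw [Fin.sum_univ_eq_sum_range fun i => simplexIntegral L m (padded X (i + 1)) -
        simplexIntegral L m (padded X i), Finset.sum_range_sub fun i => simplexIntegral L m _]
      simp [padded_of_lt]

lemma simplexIntegral_one (m : ℕ) :
    simplexIntegral L m 1 = algebraMap ℝ L ((m.factorial : ℝ)⁻¹) := by
  induction m with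
  | zero =>
    have h := simplexIntegral_map_real (L := L) (1 : MvPolynomial (Fin 0) ℝ)
    have huniv : simplexSet 0 = Set.univ := by ext u; simp [simplexSet]
    simpa [huniv, volume_pi, Measure.real] using h
  | succ m ih =>
    have hinv : algebraMap ℝ L (((m + 1 : ℕ) : ℝ)⁻¹) * ((m + 1 : ℕ) : L) = 1 := by
      rw [← map_natCast (algebraMap ℝ L), ← map_mul, inv_mul_cancel₀ (by positivity), map_one]
    rw [← one_mul (simplexIntegral L (m + 1) 1), ← hinv, mul_assoc, simplexIntegral_succ_one, ih,
      ← map_mul, Nat.factorial_succ, Nat.cast_mul, mul_inv]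

end SimplexIntegral

/-! ### Constant-coefficient differential operators -/

section DiffOp

variable {σ R : Type*} [CommRing R]

lemma pderiv_pderiv_comm (i j : σ) (a : MvPolynomial σ R) :
    pderiv i (pderiv j a) = pderiv j (pderiv i a) := by
  classical
  induction a using MvPolynomial.induction_on with
  | C a => simp
  | add p q hp hq => simp only [map_add, hp, hq]
  | mul_X p k hp =>
    simp only [Derivation.leibniz, pderiv_X, Pi.single_apply, smul_eq_mul, map_add, hp]
    split_ifs <;> simp <;> abel

lemma pderiv_rename_of_notMem_range {σ' : Type*} (f : σ → σ') {x : σ'}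
    (hx : x ∉ Set.range f) (a : MvPolynomial σ R) : pderiv x (rename f a) = 0 := by
  classical
  refine pderiv_eq_zero_of_notMem_vars fun h => hx ?_
  obtain ⟨i, -, rfl⟩ := Finset.mem_image.1 (vars_rename f a h)
  exact ⟨i, rfl⟩

/-- The commutative algebra of constant-coefficient differential operators. -/
abbrev diffOpAlgebra (σ R : Type*) [CommRing R] :
    Subalgebra R (Module.End R (MvPolynomial σ R)) :=
  Algebra.adjoin R (Set.range fun i => (pderiv i).toLinearMap)

instance : IsMulCommutative (diffOpAlgebra σ R) :=
  Algebra.isMulCommutative_adjoin R <| by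
    rintro _ ⟨i, rfl⟩ _ ⟨j, rfl⟩
    exact LinearMap.ext (pderiv_pderiv_comm i j)

open scoped IsMulCommutative in
/-- The constant-coefficient differential operator `P(∂)` with symbol `P`. -/
def diffOp : MvPolynomial σ R →ₐ[R] Module.End R (MvPolynomial σ R) :=
  (diffOpAlgebra σ R).val.comp
    (aeval (S₁ := diffOpAlgebra σ R) fun i =>
      ⟨(pderiv i).toLinearMap, Algebra.subset_adjoin ⟨i, rfl⟩⟩)

@[simp]
lemma diffOp_X (i : σ) :
    diffOp (X i) = (pderiv i : Derivation R _ (MvPolynomial σ R)).toLinearMap := by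
  simp [diffOp]

@[simp]
lemma diffOp_C (c : R) (a : MvPolynomial σ R) : diffOp (C c) a = c • a := by
  rw [algHom_C, Algebra.algebraMap_eq_smul_one, LinearMap.smul_apply, Module.End.one_apply]

lemma diffOp_mul_apply (P Q a : MvPolynomial σ R) : diffOp (P * Q) a = diffOp P (diffOp Q a) := by
  rw [map_mul, Module.End.mul_apply]

lemma diffOp_mul_X_apply (P a : MvPolynomial σ R) (i : σ) :
    diffOp (P * X i) a = diffOp P (pderiv i a) := by
  rw [diffOp_mul_apply, diffOp_X]; rfl

/-- `[P(∂), x_i] = (∂_i P)(∂)`. -/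
lemma diffOp_X_mul (P a : MvPolynomial σ R) (i : σ) :
    diffOp P (X i * a) = X i * diffOp P a + diffOp (pderiv i P) a := by
  classical
  induction P using MvPolynomial.induction_on generalizing a with
  | C c => simp [smul_eq_C_mul]; ring
  | add P Q hP hQ => simp only [map_add, LinearMap.add_apply, hP, hQ]; ring
  | mul_X P j hP =>
    rcases eq_or_ne j i with rfl | hij
    · simp [Derivation.leibniz, hP, mul_comm (X j) (pderiv j P)]
      ring
    · simp [Derivation.leibniz, hP, pderiv_X_of_ne hij, pderiv_X_of_ne hij.symm,
        mul_comm (X j) (pderiv i P)]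

lemma diffOp_eq_zero_of_coeff_eq_zero {P a : MvPolynomial σ R} {d : ℕ}
    (hP : P ∈ idealOfVars σ R ^ d) (ha : ∀ e : σ →₀ ℕ, d ≤ e.degree → coeff e a = 0) :
    diffOp P a = 0 := by
  induction d generalizing P a with
  | zero => rw [show a = 0 from MvPolynomial.ext _ _ fun e => by simp [ha e], map_zero]
  | succ d ih =>
    rw [pow_succ] at hP
    refine Submodule.mul_induction_on hP (fun Q hQ V hV => ?_) fun Q V hQ hV => ?_
    · refine Submodule.span_induction ?_ ?_ (fun V W _ _ hV hW => ?_) (fun c V _ hV => ?_) hV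
      · rintro _ ⟨i, rfl⟩
        rw [diffOp_mul_X_apply]
        refine ih hQ fun e he => ?_
        rw [coeff_pderiv, ha _ (by simpa using he), zero_mul]
      · simp
      · rw [mul_add, map_add, LinearMap.add_apply, hV, hW, add_zero]
      · rw [smul_eq_mul, mul_left_comm, diffOp_mul_apply, hV, map_zero]
    · rw [map_add, LinearMap.add_apply, hQ, hV, add_zero]

lemma diffOp_eq_zero_of_totalDegree_lt {P a : MvPolynomial σ R} {d : ℕ}
    (hP : P ∈ idealOfVars σ R ^ d) (ha : a.totalDegree < d) : diffOp P a = 0 :=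
  diffOp_eq_zero_of_coeff_eq_zero hP fun _ he =>
    coeff_eq_zero_of_totalDegree_lt (ha.trans_le he)

lemma diffOp_mul_of_mem_supported {s : Set σ} {P : MvPolynomial σ R} (hP : P ∈ supported R s)
    {b : MvPolynomial σ R} (hb : ∀ i ∈ s, pderiv i b = 0) (a : MvPolynomial σ R) :
    diffOp P (a * b) = diffOp P a * b := by
  rw [supported_eq_adjoin_X] at hP
  induction hP using Algebra.adjoin_induction generalizing a with
  | mem x hx =>
    obtain ⟨i, hi, rfl⟩ := hx
    simp [Derivation.leibniz, hb i hi, mul_comm]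
  | algebraMap c => rw [algebraMap_eq, diffOp_C, diffOp_C, smul_mul_assoc]
  | add P Q _ _ hP hQ => simp only [map_add, LinearMap.add_apply, hP, hQ, add_mul]
  | mul P Q _ _ hP hQ => rw [diffOp_mul_apply, hQ, hP, diffOp_mul_apply]

lemma constantCoeff_diffOp_X_mul (P a : MvPolynomial σ R) (i : σ) :
    constantCoeff (diffOp P (X i * a)) = constantCoeff (diffOp (pderiv i P) a) := by
  rw [diffOp_X_mul, map_add, map_mul, constantCoeff_X, zero_mul, zero_add]

lemma diffOp_one_right (P : MvPolynomial σ R) : diffOp P 1 = C (constantCoeff P) := by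
  induction P using MvPolynomial.induction_on with
  | C c => rw [diffOp_C, constantCoeff_C, smul_eq_C_mul, mul_one]
  | add P Q hP hQ => rw [map_add, LinearMap.add_apply, hP, hQ, map_add, map_add]
  | mul_X P i _ =>
    rw [diffOp_mul_X_apply, pderiv_one, map_zero, map_mul, constantCoeff_X, mul_zero, map_zero]

lemma diffOp_prod_X_prod_X {ι κ τ : Type*} [DecidableEq κ] {e : ι → τ} (he : e.Injective)
    (ρ σ : ι → κ) (s : Finset ι) :
    diffOp (∏ m ∈ s, X (e m, ρ m)) (∏ m ∈ s, (X (e m, σ m) : MvPolynomial (τ × κ) R)) =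
      if ∀ m ∈ s, ρ m = σ m then 1 else 0 := by
  classical
  induction s using Finset.induction_on with
  | empty => simp
  | insert a s ha ih =>
    have hconst : pderiv (e a, ρ a) (∏ m ∈ s, (X (e m, σ m) : MvPolynomial (τ × κ) R)) = 0 := by
      refine Finset.prod_induction _ (fun P => pderiv (e a, ρ a) P = 0) (fun P Q hP hQ => ?_)
        (by simp) fun m hm => pderiv_X_of_ne fun h => ha ?_
      · rw [Derivation.leibniz, hP, hQ, smul_zero, smul_zero, add_zero]
      · exact he (Prod.mk.inj h).1 ▸ hm
    rw [Finset.prod_insert ha, Finset.prod_insert ha, mul_comm, diffOp_mul_X_apply,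
      Derivation.leibniz, hconst, smul_zero, zero_add, smul_eq_mul, pderiv_X]
    by_cases h : ρ a = σ a
    · simp [h, ih]
    · simp [h, Ne.symm h]

end DiffOp

section Pullback

variable {σ σ' R : Type*} [CommRing R] [Fintype σ] [DecidableEq σ']

/-- The pull-back of symbols along a map of variables, `x ↦ ∑_{f x' = x} x'`; it is adjoint to
`rename f`, see `diffOp_rename`. -/
def symbolPullback (f : σ → σ') : MvPolynomial σ' R →ₐ[R] MvPolynomial σ R :=
  aeval fun x => ∑ x' with f x' = x, X x'

lemma symbolPullback_X (f : σ → σ') (x : σ') :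
    symbolPullback f (X x : MvPolynomial σ' R) = ∑ x' with f x' = x, X x' :=
  aeval_X _ _

lemma symbolPullback_mem_pow_idealOfVars (f : σ → σ') {P : MvPolynomial σ' R} {d : ℕ}
    (hP : P ∈ idealOfVars σ' R ^ d) : symbolPullback f P ∈ idealOfVars σ R ^ d := by
  have hle : (idealOfVars σ' R).map (symbolPullback (R := R) f) ≤ idealOfVars σ R := by
    rw [idealOfVars, Ideal.map_span, Ideal.span_le]
    rintro _ ⟨_, ⟨x, rfl⟩, rfl⟩
    rw [symbolPullback_X]
    exact Ideal.sum_mem _ fun i _ => Ideal.subset_span ⟨i, rfl⟩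
  exact Ideal.pow_right_mono hle d <| Ideal.map_pow (symbolPullback (R := R) f) _ d ▸
    Ideal.mem_map_of_mem _ hP

lemma pderiv_rename_sum (f : σ → σ') (x : σ') (a : MvPolynomial σ R) :
    pderiv x (rename f a) = rename f (∑ x' with f x' = x, pderiv x' a) := by
  classical
  induction a using MvPolynomial.induction_on with
  | C a => simp
  | add p q hp hq => simp only [map_add, hp, hq, Finset.sum_add_distrib]
  | mul_X p j hp =>
    have hX : ∑ x' with f x' = x, (pderiv x' (X j : MvPolynomial σ R)) =
        if f j = x then 1 else 0 := by
      simp [pderiv_X, Pi.single_apply, eq_comm (a := j)]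
    simp only [map_mul, rename_X, Derivation.leibniz, smul_eq_mul, hp, Finset.sum_add_distrib,
      map_add, ← Finset.mul_sum, hX]
    simp [pderiv_X, Pi.single_apply, apply_ite (rename f)]

theorem diffOp_rename (f : σ → σ') (P : MvPolynomial σ' R) (a : MvPolynomial σ R) :
    diffOp P (rename f a) = rename f (diffOp (symbolPullback f P) a) := by
  induction P using MvPolynomial.induction_on generalizing a with
  | C c => simp [algHom_C]
  | add p q hp hq => simp only [map_add, LinearMap.add_apply, hp, hq]
  | mul_X p x hp =>
    rw [diffOp_mul_X_apply, pderiv_rename_sum, hp, map_mul, diffOp_mul_apply, symbolPullback_X]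
    simp [LinearMap.sum_apply]

lemma constantCoeff_diffOp_rename (f : σ → σ') (P : MvPolynomial σ' R) (a : MvPolynomial σ R) :
    constantCoeff (diffOp P (rename f a)) = constantCoeff (diffOp (symbolPullback f P) a) := by
  rw [diffOp_rename, constantCoeff_rename]

lemma symbolPullback_X_of_notMem_range {f : σ → σ'} {x : σ'} (hx : x ∉ Set.range f) :
    symbolPullback f (X x : MvPolynomial σ' R) = 0 := by
  rw [symbolPullback_X, Finset.filter_false_of_mem fun i _ hi => hx ⟨i, hi⟩, Finset.sum_empty]

lemma symbolPullback_X_apply {f : σ → σ'} (hf : f.Injective) (i : σ) :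
    symbolPullback f (X (f i) : MvPolynomial σ' R) = X i := by
  classical
  simp [symbolPullback_X, hf.eq_iff, Finset.sum_filter]

lemma symbolPullback_rename {f : σ → σ'} (hf : f.Injective) (a : MvPolynomial σ R) :
    symbolPullback f (rename f a) = a := by
  have : (symbolPullback (R := R) f).comp (rename f) = AlgHom.id R _ :=
    algHom_ext fun i => by simp [symbolPullback_X_apply hf]
  exact DFunLike.congr_fun this a

end Pullback

/-! ### The symbol of `τ` -/

section SymplecticForm

variable {L : Type*} [CommRing L] [Algebra ℝ L] {n : ℕ}

/-- The constant Poisson tensor `α`, as a bilinear form `½ ∑_r (x_{p_r} y_{q_r} − x_{q_r} y_{p_r})`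
on covectors with entries in `L`. -/
def symplecticForm : LinearMap.BilinForm L (Fin (2 * n) → L) :=
  (1 / 2 : ℝ) • ∑ r : Fin n,
    (LinearMap.BilinForm.linMulLin (LinearMap.proj (pVar n r)) (LinearMap.proj (qVar n r)) -
      LinearMap.BilinForm.linMulLin (LinearMap.proj (qVar n r)) (LinearMap.proj (pVar n r)))

lemma symplecticForm_apply (x y : Fin (2 * n) → L) :
    symplecticForm x y = (1 / 2 : ℝ) •
      ∑ r : Fin n, (x (pVar n r) * y (qVar n r) - x (qVar n r) * y (pVar n r)) := by
  simp [symplecticForm, LinearMap.sum_apply]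

lemma symplecticForm_isAlt :
    LinearMap.BilinForm.IsAlt (symplecticForm : LinearMap.BilinForm L (Fin (2 * n) → L)) :=
  fun x => by simp [symplecticForm_apply, mul_comm]

lemma map_symplecticForm {L' : Type*} [CommRing L'] [Algebra ℝ L'] (f : L →ₐ[ℝ] L')
    (x y : Fin (2 * n) → L) :
    f (symplecticForm x y) = symplecticForm (fun v => f (x v)) (fun v => f (y v)) := by
  simp [symplecticForm_apply]

end SymplecticForm

/-- The sign of `b - a`. -/
def orderSign (a b : ℕ) : ℤ := if a < b then 1 else if b < a then -1 else 0

/-- `2u_a − 2u_b ± 1` as a polynomial in `u₁, …, u_k`, where `u₀ = 0`; the sign is `+` for `a < b`,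
which makes the coefficient antisymmetric. -/
def kernelCoeff (L : Type*) [CommRing L] (k a b : ℕ) : MvPolynomial (Fin k) L :=
  2 * padded X a - 2 * padded X b + (orderSign a b : MvPolynomial (Fin k) L)

/-- The exponent `∑_{a<b} (2u_a − 2u_b + 1) ω(x_a, x_b)` in the definition of `τ`, as a polynomial
in `u`; the antisymmetry of both factors allows the sum to range over all pairs. -/
def exponentPoly {L : Type*} [CommRing L] [Algebra ℝ L] {n k : ℕ}
    (x : Fin (k + 1) → Fin (2 * n) → L) : MvPolynomial (Fin k) L :=
  (1 / 2 : ℝ) • ∑ a : Fin (k + 1), ∑ b : Fin (k + 1),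
    kernelCoeff L k a b * C (symplecticForm (x a) (x b))

section ExponentPoly

lemma sum_pairs_eq_sum_sum_ite {M : Type*} [AddCommMonoid M] {m : ℕ} (f : Fin m → Fin m → M) :
    ∑ p : Pairs m, f p.1.1 p.1.2 = ∑ a, ∑ b, if a < b then f a b else 0 := by
  rw [← Fintype.sum_prod_type' (f := fun a b => if a < b then f a b else 0), ← Finset.sum_filter,
    Finset.sum_subtype (p := fun p : Fin m × Fin m => p.1 < p.2) _ (by simp)]

lemma sum_sum_eq_two_nsmul_sum_pairs {M : Type*} [AddCommMonoid M] {m : ℕ}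
    (f : Fin m → Fin m → M) (hsymm : ∀ a b, f b a = f a b) (hdiag : ∀ a, f a a = 0) :
    ∑ a, ∑ b, f a b = 2 • ∑ p : Pairs m, f p.1.1 p.1.2 := by
  have hswap : ∑ a, ∑ b, (if a < b then f a b else 0) = ∑ a, ∑ b, if b < a then f a b else 0 := by
    rw [Finset.sum_comm]
    simp only [hsymm]
  rw [two_nsmul, sum_pairs_eq_sum_sum_ite]
  nth_rewrite 2 [hswap]
  simp only [← Finset.sum_add_distrib]
  refine Finset.sum_congr rfl fun a _ => Finset.sum_congr rfl fun b _ => ?_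
  rcases lt_trichotomy a b with hab | rfl | hab
  · simp [hab, hab.asymm]
  · simp [hdiag]
  · simp [hab, hab.asymm]

lemma kernelCoeff_swap (L : Type*) [CommRing L] (k a b : ℕ) :
    kernelCoeff L k b a = -kernelCoeff L k a b := by
  have hsign : orderSign b a = -orderSign a b := by unfold orderSign; split_ifs <;> omega
  rw [kernelCoeff, kernelCoeff, hsign]
  push_cast
  ring

lemma pderiv_padded_X {R : Type*} [CommSemiring R] {k : ℕ} (i : Fin k) {a : ℕ} (ha : a ≤ k) :
    pderiv i (padded (X : Fin k → MvPolynomial (Fin k) R) a) = if a = i.1 + 1 then 1 else 0 := by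
  rcases a with _ | a
  · simp
  · rw [padded_val_succ X ⟨a, ha⟩, pderiv_X]
    simp [Pi.single_apply, Fin.ext_iff]

lemma pderiv_kernelCoeff {L : Type*} [CommRing L] {k : ℕ} (i : Fin k) {a b : ℕ} (ha : a ≤ k)
    (hb : b ≤ k) : pderiv i (kernelCoeff L k a b) =
      (if a = i.1 + 1 then 2 else 0) - if b = i.1 + 1 then 2 else 0 := by
  rw [kernelCoeff, ← map_ofNat C 2, map_add, map_sub, Derivation.map_intCast, add_zero,
    pderiv_C_mul, pderiv_C_mul, pderiv_padded_X i ha, pderiv_padded_X i hb]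
  split_ifs <;> simp

variable {L : Type*} [CommRing L] [Algebra ℝ L] {n k : ℕ}

lemma exponentPoly_eq_sum_pairs (x : Fin (k + 1) → Fin (2 * n) → L) :
    exponentPoly x = ∑ p : Pairs (k + 1),
      (2 * padded X p.1.1.1 - 2 * padded X p.1.2.1 + 1) *
        C (symplecticForm (x p.1.1) (x p.1.2)) := by
  rw [exponentPoly, sum_sum_eq_two_nsmul_sum_pairs, ← Nat.cast_smul_eq_nsmul ℝ, smul_smul]
  · norm_num
    exact Finset.sum_congr rfl fun p _ => by simp [kernelCoeff, orderSign, p.2]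
  · intro a b
    rw [kernelCoeff_swap, ← symplecticForm_isAlt.neg_eq, map_neg, neg_mul_neg]
  · intro a
    rw [symplecticForm_isAlt, map_zero, mul_zero]

lemma map_exponentPoly {L' : Type*} [CommRing L'] [Algebra ℝ L'] (f : L →ₐ[ℝ] L')
    (x : Fin (k + 1) → Fin (2 * n) → L) :
    map (f : L →+* L') (exponentPoly x) = exponentPoly fun a v => f (x a v) := by
  simp [exponentPoly_eq_sum_pairs, map_padded, map_symplecticForm]

lemma pderiv_exponentPoly (x : Fin (k + 1) → Fin (2 * n) → L) (i : Fin k) :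
    pderiv i (exponentPoly x) = C (2 * symplecticForm (x i.succ) (∑ b, x b)) := by
  have hterm (a b : Fin (k + 1)) :
      pderiv i (kernelCoeff L k a b * C (symplecticForm (x a) (x b))) =
        (if a = i.succ then C (2 * symplecticForm (x a) (x b)) else 0) +
          if b = i.succ then C (2 * symplecticForm (x b) (x a)) else 0 := by
    rw [mul_comm, pderiv_C_mul, pderiv_kernelCoeff i a.is_le b.is_le,
      ← symplecticForm_isAlt.neg_eq (x b) (x a)]
    simp only [Fin.ext_iff, Fin.val_succ, map_mul, map_neg, map_ofNat]
    split_ifs <;> ring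
  rw [exponentPoly, Derivation.map_smul_of_tower]
  simp only [map_sum, hterm, Finset.sum_add_distrib]
  rw [Finset.sum_comm]
  simp only [Finset.sum_ite_eq', Finset.mem_univ, if_true]
  rw [← map_sum, ← Finset.mul_sum, ← map_sum, ← two_nsmul, ← Nat.cast_smul_eq_nsmul ℝ, smul_smul]
  norm_num

end ExponentPoly

section Merge

/-- The map of positions `{0, …, k + 1} → {0, …, k}` under multiplication of the neighbouring
factors `j` and `j + 1` of a cyclic word; for `j = k + 1` the last factor is absorbed by the
zeroth one. -/
def mergeIndex {k : ℕ} (j a : Fin (k + 2)) : Fin (k + 1) :=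
  ⟨(if a.1 ≤ j.1 then a.1 else a.1 - 1) % (k + 1), Nat.mod_lt _ k.succ_pos⟩

/-- The tuple obtained by adding the cyclically neighbouring entries `j` and `j + 1`. -/
def mergeAt {V : Type*} [AddCommMonoid V] {k : ℕ} (x : Fin (k + 2) → V) (j : Fin (k + 2)) :
    Fin (k + 1) → V :=
  fun c => ∑ a with mergeIndex j a = c, x a

variable {k : ℕ}

lemma mergeIndex_val (j a : Fin (k + 2)) :
    (mergeIndex j a).1 =
      if a.1 = k + 1 ∧ j.1 = k + 1 then 0 else if a.1 ≤ j.1 then a.1 else a.1 - 1 := by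
  by_cases h : a.1 = k + 1 ∧ j.1 = k + 1
  · simp [mergeIndex, h]
  · rw [if_neg h]
    exact Nat.mod_eq_of_lt (by split_ifs <;> omega)

lemma mergeIndex_eq_succ_iff {j a : Fin (k + 2)} {c : Fin k} :
    mergeIndex j a = c.succ ↔
      a = c.succ.castSucc ∧ c.1 + 1 ≤ j.1 ∨ a = c.succ.succ ∧ j.1 ≤ c.1 + 1 := by
  have := a.2
  have := j.2
  have := c.2
  simp only [Fin.ext_iff, mergeIndex_val, Fin.val_succ, Fin.val_castSucc]
  split_ifs <;> grind

lemma mergeAt_succ {V : Type*} [AddCommMonoid V] (x : Fin (k + 2) → V) (j : Fin (k + 2))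
    (c : Fin k) :
    mergeAt x j c.succ =
      (if c.1 + 1 ≤ j.1 then x c.succ.castSucc else 0) +
        if j.1 ≤ c.1 + 1 then x c.succ.succ else 0 := by
  have hterm (a : Fin (k + 2)) : (if mergeIndex j a = c.succ then x a else 0) =
      (if a = c.succ.castSucc then if c.1 + 1 ≤ j.1 then x a else 0 else 0) +
        if a = c.succ.succ then if j.1 ≤ c.1 + 1 then x a else 0 else 0 := by
    have hne : c.succ.castSucc ≠ c.succ.succ := Fin.castSucc_lt_succ.ne
    simp only [mergeIndex_eq_succ_iff]
    rcases eq_or_ne a c.succ.castSucc with rfl | hcast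
    · simp only [hne, true_and, false_and, or_false, if_true, if_false, add_zero]
    · simp only [hcast, false_and, false_or, ite_and, if_false, zero_add]
  rw [mergeAt, Finset.sum_filter]
  simp [hterm, Finset.sum_add_distrib]

lemma orderSign_sub_orderSign_mergeIndex (j a b : Fin (k + 2)) :
    orderSign a b - orderSign (mergeIndex j a) (mergeIndex j b)
        + 2 * (if a.1 = k + 1 ∧ j.1 = k + 1 then 1 else 0)
        - 2 * (if b.1 = k + 1 ∧ j.1 = k + 1 then 1 else 0) =
      (if a = j ∧ b = j + 1 then 1 else 0) - if b = j ∧ a = j + 1 then 1 else 0 := by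
  have hj : (j + 1).1 = if j.1 = k + 1 then 0 else j.1 + 1 := by
    simp [Fin.val_add_one, Fin.ext_iff]
  simp only [orderSign, mergeIndex_val, Fin.ext_iff, hj]
  split_ifs <;> omega

variable {L : Type*} [CommRing L]

lemma faceRestrict_padded_X (j : ℕ) {a : ℕ} (ha : a ≤ k + 1) :
    faceRestrict L j (padded X a : MvPolynomial (Fin (k + 1)) L) =
      padded X (if a ≤ j then a else a - 1) := by
  rcases a with _ | a
  · simp
  · rw [padded_val_succ X ⟨a, ha⟩]
    simp [faceRestrict, simplexFace]

lemma faceRestrict_padded_X_eq_mergeIndex (j a : Fin (k + 2)) :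
    faceRestrict L j.1 (padded X a.1 : MvPolynomial (Fin (k + 1)) L) =
      padded X (mergeIndex j a).1 + if a.1 = k + 1 ∧ j.1 = k + 1 then 1 else 0 := by
  rw [faceRestrict_padded_X _ a.is_le, mergeIndex_val]
  by_cases h : a.1 = k + 1 ∧ j.1 = k + 1
  · simp [h, padded_of_lt]
  · simp only [if_neg h, add_zero]

lemma faceRestrict_kernelCoeff (j a b : Fin (k + 2)) :
    faceRestrict L j.1 (kernelCoeff L (k + 1) a b) =
      kernelCoeff L k (mergeIndex j a) (mergeIndex j b) +
        ((if a = j ∧ b = j + 1 then 1 else 0) - if b = j ∧ a = j + 1 then 1 else 0) := by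
  have hsign := congrArg (Int.cast : ℤ → MvPolynomial (Fin k) L)
    (orderSign_sub_orderSign_mergeIndex j a b)
  push_cast at hsign
  simp only [kernelCoeff, map_add, map_sub, map_mul, map_intCast, map_ofNat,
    faceRestrict_padded_X_eq_mergeIndex]
  linear_combination hsign

variable [Algebra ℝ L] {n : ℕ}

lemma exponentPoly_mergeAt (x : Fin (k + 2) → Fin (2 * n) → L) (j : Fin (k + 2)) :
    exponentPoly (mergeAt x j) = (1 / 2 : ℝ) • ∑ a, ∑ b,
      kernelCoeff L k (mergeIndex j a) (mergeIndex j b) * C (symplecticForm (x a) (x b)) := by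
  rw [exponentPoly]
  congr 1
  rw [← Finset.sum_fiberwise (s := Finset.univ) (g := mergeIndex j)]
  refine Finset.sum_congr rfl fun c _ => ?_
  simp only [mergeAt, map_sum, LinearMap.sum_apply, Finset.mul_sum]
  rw [Finset.sum_comm]
  rw [← Finset.sum_fiberwise (s := Finset.univ) (g := mergeIndex j)]
  refine Finset.sum_congr rfl fun d _ => Finset.sum_congr rfl fun b hb =>
    Finset.sum_congr rfl fun a ha => ?_
  rw [(Finset.mem_filter.1 ha).2, (Finset.mem_filter.1 hb).2]

theorem faceRestrict_exponentPoly (x : Fin (k + 2) → Fin (2 * n) → L) (j : Fin (k + 2)) :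
    faceRestrict L j.1 (exponentPoly x) =
      C (symplecticForm (x j) (x (j + 1))) + exponentPoly (mergeAt x j) := by
  rw [exponentPoly_mergeAt, exponentPoly, AlgHom.map_smul_of_tower]
  simp only [map_sum, map_mul, faceRestrict_C, faceRestrict_kernelCoeff, add_mul, sub_mul,
    Finset.sum_add_distrib, Finset.sum_sub_distrib, ite_mul, one_mul, zero_mul, ite_and]
  rw [Finset.sum_comm (f := fun a b => if b = j then _ else _)]
  simp only [Finset.sum_ite_irrel, Finset.sum_ite_eq', Finset.mem_univ, if_true,
    Finset.sum_const_zero]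
  rw [← symplecticForm_isAlt.neg_eq (x j), map_neg, sub_neg_eq_add, smul_add, add_comm,
    ← two_nsmul, ← Nat.cast_smul_eq_nsmul ℝ, smul_smul]
  norm_num

end Merge

section Determinants

variable {L : Type*} [CommRing L] {m : ℕ}

/-- The determinant of the rows `x₁, …, x_m`, omitting `x₀`. -/
def tailDet (x : Fin (m + 1) → Fin m → L) : L :=
  (Matrix.of fun a => x a.succ).det

/-- `(-1) ^ (t - 1)` times the minor of `y` omitting the `t`-th of its rows, counted from `1`, and
zero if there is no such row. -/
def signedMinor (y : Fin (m + 1) → Fin m → L) : ℕ → L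
  | 0 => 0
  | t + 1 => if h : t < m + 1 then
      (-1) ^ t * (Matrix.of fun a => y (Fin.succAbove ⟨t, h⟩ a)).det else 0

lemma signedMinor_zero (y : Fin (m + 1) → Fin m → L) : signedMinor y 0 = 0 := rfl

lemma signedMinor_val_succ (y : Fin (m + 1) → Fin m → L) (i : Fin (m + 1)) :
    signedMinor y (i.1 + 1) = (-1) ^ i.1 * (Matrix.of fun a => y (i.succAbove a)).det :=
  dif_pos i.2

lemma signedMinor_of_lt (y : Fin (m + 1) → Fin m → L) {t : ℕ} (ht : m + 1 < t) :
    signedMinor y t = 0 := by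
  obtain ⟨t, rfl⟩ := Nat.exists_eq_add_one_of_ne_zero (by omega : t ≠ 0)
  exact dif_neg (by omega)

/-- Laplace expansion of a determinant with a repeated column. -/
lemma sum_signedMinor_smul (y : Fin (m + 1) → Fin m → L) :
    ∑ i : Fin (m + 1), signedMinor y (i.1 + 1) • y i = 0 := by
  funext v
  have hdet : (Matrix.of fun i => (Fin.cons (y i v) (y i) : Fin (m + 1) → L)).det = 0 :=
    Matrix.det_zero_of_column_eq (Fin.succ_ne_zero v).symm fun i => by simp
  rw [Matrix.det_succ_column_zero] at hdet
  simp only [Finset.sum_apply, Pi.smul_apply, smul_eq_mul, Pi.zero_apply, signedMinor_val_succ]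
  rw [← hdet]
  exact Finset.sum_congr rfl fun i _ => mul_right_comm _ _ _

lemma det_updateRow_add_succ (y : Fin (m + 1) → Fin m → L) (c : Fin m) :
    ((Matrix.of fun a => y (c.succ.succAbove a)).updateRow c (y c.castSucc + y c.succ)).det =
      (Matrix.of fun a => y (c.succ.succAbove a)).det +
        (Matrix.of fun a => y (c.castSucc.succAbove a)).det := by
  rw [Matrix.det_updateRow_add]
  congr 2
  · ext a v
    rcases eq_or_ne a c with rfl | hac
    · simp
    · simp [hac]
  · ext a v
    rcases lt_trichotomy a c with hac | rfl | hac
    · simp [hac.ne, Fin.succAbove_succ_of_le, Fin.succAbove_castSucc_of_lt, hac, hac.le]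
    · simp
    · simp [hac.ne', Fin.succAbove_succ_of_lt, Fin.succAbove_castSucc_of_le, hac, hac.le]

lemma neg_one_pow_mul_tailDet_mergeAt (x : Fin (m + 2) → Fin m → L) (j : Fin (m + 2)) :
    (-1) ^ j.1 * tailDet (mergeAt x j) =
      signedMinor (Fin.tail x) (j.1 + 1) - signedMinor (Fin.tail x) j.1 := by
  induction j using Fin.cases with
  | zero =>
    have h := signedMinor_val_succ (Fin.tail x) 0
    rw [Fin.val_zero] at h
    rw [Fin.val_zero, h, signedMinor_zero]
    simp [tailDet, mergeAt_succ, Fin.tail]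
  | succ j =>
    induction j using Fin.lastCases with
    | last =>
      rw [signedMinor_of_lt _ (by simp), Fin.val_succ, signedMinor_val_succ]
      simp [tailDet, mergeAt_succ, Fin.tail, pow_succ, (Fin.is_lt _).not_ge]
    | cast c =>
      have hrow : (Matrix.of fun a => mergeAt x c.castSucc.succ a.succ) =
          (Matrix.of fun a => Fin.tail x (c.succ.succAbove a)).updateRow c
            (Fin.tail x c.castSucc + Fin.tail x c.succ) := by
        ext a v
        rcases lt_trichotomy a c with hac | rfl | hac
        · simp [mergeAt_succ, Fin.tail, hac.ne, hac.le, hac.not_ge, Fin.succAbove_succ_of_le]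
        · simp [mergeAt_succ, Fin.tail]
        · simp [mergeAt_succ, Fin.tail, hac.ne', hac.le, hac.not_ge, hac,
            Fin.succAbove_succ_of_lt]
      have hval : (c.castSucc.succ : Fin (m + 2)).1 = c.succ.1 := by simp
      rw [tailDet, hrow, det_updateRow_add_succ, hval, signedMinor_val_succ, ← hval, Fin.val_succ,
        signedMinor_val_succ]
      simp
      ring

end Determinants

lemma inv_factorial_smul_add_pow (𝕜 : Type*) {A : Type*} [Field 𝕜] [CharZero 𝕜] [CommSemiring A]
    [Algebra 𝕜 A] (a b : A) (m : ℕ) :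
    (m.factorial⁻¹ : 𝕜) • (a + b) ^ m = ∑ q ∈ Finset.HasAntidiagonal.antidiagonal m,
      ((q.1.factorial⁻¹ : 𝕜) • a ^ q.1) * ((q.2.factorial⁻¹ : 𝕜) • b ^ q.2) := by
  rw [(Commute.all a b).add_pow', Finset.smul_sum]
  refine Finset.sum_congr rfl fun q hq => ?_
  rw [← Nat.cast_smul_eq_nsmul 𝕜, smul_smul, smul_mul_smul_comm,
    ← Finset.HasAntidiagonal.mem_antidiagonal.1 hq, Nat.cast_add_choose]
  have hne (k : ℕ) : (k.factorial : 𝕜) ≠ 0 := Nat.cast_ne_zero.2 k.factorial_ne_zero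
  congr 1
  field_simp [hne]

/-- The coefficient of `ε ^ m` in `∫ exp (ε W)`, where `W` is the exponent of `τ`. -/
def expIntegral {L : Type*} [CommRing L] [Algebra ℝ L] {n k : ℕ} (m : ℕ)
    (x : Fin (k + 1) → Fin (2 * n) → L) : L :=
  (m.factorial⁻¹ : ℝ) • simplexIntegral L k (exponentPoly x ^ m)

section CocycleIdentity

variable {L : Type*} [CommRing L] [Algebra ℝ L] {n k : ℕ}

lemma map_expIntegral {L' : Type*} [CommRing L'] [Algebra ℝ L'] (f : L →ₐ[ℝ] L') (m : ℕ)
    (x : Fin (k + 1) → Fin (2 * n) → L) :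
    f (expIntegral m x) = expIntegral m fun a v => f (x a v) := by
  rw [expIntegral, map_smul, ← simplexIntegral_map, map_pow, map_exponentPoly, expIntegral]

/-- Abel summation moves the difference from the minors to the integrals over consecutive faces,
where Stokes' formula applies. -/
lemma sum_tailDet_mul_integral_faceRestrict (x : Fin (2 * n + 2) → Fin (2 * n) → L) (m : ℕ) :
    ∑ j : Fin (2 * n + 2), (-1) ^ j.1 * tailDet (mergeAt x j) *
      simplexIntegral L (2 * n) (faceRestrict L j.1 (exponentPoly x) ^ m) = 0 := by
  let E := signedMinor (Fin.tail x)
  let F (j : ℕ) := simplexIntegral L (2 * n) (faceRestrict L j (exponentPoly x) ^ m)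
  have hstokes (i : Fin (2 * n + 1)) : (F (i.1 + 1) - F i.1) * E (i.1 + 1) =
      2 * m * simplexIntegral L (2 * n + 1) (exponentPoly x ^ (m - 1)) *
        (E (i.1 + 1) * symplecticForm (Fin.tail x i) (∑ b, x b)) := by
    simp only [F, ← map_pow, ← simplexIntegral_pderiv, Derivation.leibniz_pow, pderiv_exponentPoly]
    rw [smul_eq_mul, mul_comm (exponentPoly x ^ _), map_nsmul, simplexIntegral_C_mul, nsmul_eq_mul,
      Fin.tail]
    ring
  have hminors : ∑ i : Fin (2 * n + 1),
      E (i.1 + 1) * symplecticForm (Fin.tail x i) (∑ b, x b) = 0 := by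
    have h := congrArg (symplecticForm · (∑ b, x b)) (sum_signedMinor_smul (Fin.tail x))
    simpa only [map_sum (symplecticForm (L := L)), map_smul, LinearMap.sum_apply,
      LinearMap.smul_apply, smul_eq_mul, map_zero, LinearMap.zero_apply] using h
  calc
    _ = ∑ j ∈ Finset.range (2 * n + 2), F j • (E (j + 1) - E j) := by
      simp only [neg_one_pow_mul_tailDet_mergeAt]
      rw [← Fin.sum_univ_eq_sum_range (fun j => F j • (E (j + 1) - E j))]
      exact Finset.sum_congr rfl fun j _ => mul_comm _ _
    _ = -∑ i ∈ Finset.range (2 * n + 1), (F (i + 1) - F i) * E (i + 1) := by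
      rw [Finset.sum_range_by_parts]
      simp only [Finset.sum_range_sub]
      simp [E, signedMinor_zero, signedMinor_of_lt]
    _ = 0 := by
      rw [← Fin.sum_univ_eq_sum_range (fun i => (F (i + 1) - F i) * E (i + 1))]
      simp only [hstokes, ← Finset.mul_sum, hminors, mul_zero, neg_zero]

lemma smul_integral_C_add_exponentPoly_pow (m : ℕ) (c : L) (x : Fin (k + 1) → Fin (2 * n) → L) :
    (m.factorial⁻¹ : ℝ) • simplexIntegral L k ((C c + exponentPoly x) ^ m) =
      ∑ q ∈ Finset.HasAntidiagonal.antidiagonal m,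
        ((q.1.factorial⁻¹ : ℝ) • c ^ q.1) * expIntegral q.2 x := by
  rw [← LinearMap.map_smul_of_tower, inv_factorial_smul_add_pow ℝ, map_sum]
  refine Finset.sum_congr rfl fun q _ => ?_
  rw [mul_smul_comm, LinearMap.map_smul_of_tower, expIntegral, smul_mul_assoc,
    LinearMap.map_smul_of_tower, ← map_pow, simplexIntegral_C_mul, smul_mul_smul_comm, smul_smul,
    mul_comm]

theorem sum_neg_one_pow_mul_symbol_mergeAt (x : Fin (2 * n + 2) → Fin (2 * n) → L) (m : ℕ) :
    ∑ j : Fin (2 * n + 2), (-1) ^ j.1 * ∑ q ∈ Finset.HasAntidiagonal.antidiagonal m,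
      ((q.1.factorial⁻¹ : ℝ) • symplecticForm (x j) (x (j + 1)) ^ q.1) *
        (tailDet (mergeAt x j) * expIntegral q.2 (mergeAt x j)) = 0 := by
  have h := congrArg ((m.factorial⁻¹ : ℝ) • ·) (sum_tailDet_mul_integral_faceRestrict x m)
  simp only [smul_zero, Finset.smul_sum, faceRestrict_exponentPoly, ← mul_smul_comm,
    smul_integral_C_add_exponentPoly_pow] at h
  rw [← h]
  refine Finset.sum_congr rfl fun j _ => ?_
  rw [mul_assoc]
  simp only [Finset.mul_sum, mul_left_comm]

end CocycleIdentity

/-- The variable of `A^{⊗k}` belonging to the `v`-th coordinate of the `i`-th factor, read as the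
symbol of `∂_{y_v}` acting on that factor. -/
def genericCovector (n k : ℕ) (i : Fin k) (v : Fin (2 * n)) : Tens n k := X (i, v)

/-- The symbol of the coefficient of `ε ^ m` in `τ`. -/
def tauSymbol (n m : ℕ) : Tens n (2 * n + 1) :=
  tailDet (genericCovector n (2 * n + 1)) * expIntegral m (genericCovector n (2 * n + 1))

/-- The coefficient of `∏ (ε α_{ij}) ^ K(i, j)` in `τ`. -/
def simplexCoeff (k : ℕ) (K : Pairs (k + 1) → ℕ) : ℝ :=
  (∏ p, ((K p).factorial : ℝ)⁻¹) * ∫ u in simplexSet k,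
    ∏ p : Pairs (k + 1), (2 * cons0 k u p.1.1 - 2 * cons0 k u p.1.2 + 1) ^ K p

section TauSymbol

lemma diffOp_real_smul {σ : Type*} (r : ℝ) (P a : MvPolynomial σ Kc) :
    diffOp (r • P) a = algebraMap ℂ Kc r • diffOp P a := by
  rw [← algebraMap_smul Kc r P, map_smul]; rfl

lemma alphaOp_eq_diffOp (n k : ℕ) (i j : Fin k) :
    alphaOp n k i j = diffOp (symplecticForm (genericCovector n k i) (genericCovector n k j)) := by
  refine LinearMap.ext fun a => ?_
  rw [symplecticForm_apply, diffOp_real_smul, alphaOp]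
  simp [Dop, genericCovector]

lemma piOp_eq_diffOp (n : ℕ) : piOp n = diffOp (tailDet (genericCovector n (2 * n + 1))) := by
  rw [tailDet, ← Matrix.det_transpose, Matrix.det_apply, map_sum]
  refine Finset.sum_congr rfl fun σ _ => ?_
  rw [← List.prod_ofFn, Units.smul_def, map_zsmul, map_list_prod, List.map_ofFn]
  exact congrArg (fun l => (Equiv.Perm.sign σ : ℤ) • List.prod l)
    (congrArg List.ofFn (funext fun _ => (diffOp_X _).symm))

lemma alphaPowProd_eq_diffOp (n k : ℕ) (K : Pairs k → ℕ) :
    alphaPowProd n k K = diffOp (∏ p : Pairs k,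
      symplecticForm (genericCovector n k p.1.1) (genericCovector n k p.1.2) ^ K p) := by
  rw [← Finset.prod_map_toList, map_list_prod, List.map_map, alphaPowProd]
  simp [Function.comp_def, alphaOp_eq_diffOp]

lemma cons0_eq_padded {k : ℕ} (u : Fin k → ℝ) (a : Fin (k + 1)) : cons0 k u a = padded u a := by
  cases a using Fin.cases <;> simp [cons0]

lemma inv_factorial_smul_sum_pow (𝕜 : Type*) {A ι : Type*} [Field 𝕜] [CharZero 𝕜]
    [CommSemiring A] [Algebra 𝕜 A] [DecidableEq ι] (s : Finset ι) (a : ι → A) (m : ℕ) :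
    (m.factorial⁻¹ : 𝕜) • (∑ i ∈ s, a i) ^ m =
      ∑ K ∈ s.piAntidiag m, (∏ i ∈ s, ((K i).factorial : 𝕜)⁻¹) • ∏ i ∈ s, a i ^ K i := by
  rw [Finset.sum_pow_eq_sum_piAntidiag, Finset.smul_sum]
  refine Finset.sum_congr rfl fun K hK => ?_
  have hspec : (∏ i ∈ s, ((K i).factorial : 𝕜)) * Nat.multinomial s K = m.factorial := by
    exact_mod_cast (Finset.mem_piAntidiag.1 hK).1 ▸ Nat.multinomial_spec s K
  have hprod : ∏ i ∈ s, ((K i).factorial : 𝕜) ≠ 0 :=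
    Finset.prod_ne_zero_iff.2 fun i _ => Nat.cast_ne_zero.2 (K i).factorial_ne_zero
  rw [← nsmul_eq_mul, ← Nat.cast_smul_eq_nsmul 𝕜, smul_smul, ← hspec, Finset.prod_inv_distrib]
  congr 1
  have hmult : (Nat.multinomial s K : 𝕜) ≠ 0 :=
    right_ne_zero_of_mul (hspec ▸ Nat.cast_ne_zero.2 m.factorial_ne_zero)
  field_simp

lemma expIntegral_eq_sum_piAntidiag {L : Type*} [CommRing L] [Algebra ℝ L] {n k : ℕ} (m : ℕ)
    (x : Fin (k + 1) → Fin (2 * n) → L) :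
    expIntegral m x = ∑ K ∈ Finset.univ.piAntidiag m,
      simplexCoeff k K • ∏ p : Pairs (k + 1), symplecticForm (x p.1.1) (x p.1.2) ^ K p := by
  rw [expIntegral, ← LinearMap.map_smul_of_tower, exponentPoly_eq_sum_pairs,
    inv_factorial_smul_sum_pow ℝ, map_sum]
  refine Finset.sum_congr rfl fun K _ => ?_
  have hreal : ∏ p : Pairs (k + 1), (2 * padded X p.1.1.1 - 2 * padded X p.1.2.1 + 1 :
      MvPolynomial (Fin k) L) ^ K p = map (algebraMap ℝ L)
        (∏ p : Pairs (k + 1), (2 * padded X p.1.1.1 - 2 * padded X p.1.2.1 + 1) ^ K p) := by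
    simp [map_padded]
  rw [LinearMap.map_smul_of_tower, Finset.prod_congr rfl fun p _ => mul_pow _ _ _,
    Finset.prod_mul_distrib, hreal]
  simp only [← map_pow, ← map_prod]
  rw [mul_comm, simplexIntegral_C_mul, simplexIntegral_map_real, mul_comm, ← Algebra.smul_def,
    smul_smul, simplexCoeff]
  simp [cons0_eq_padded, map_padded]

lemma symplecticForm_genericCovector_mem (n k : ℕ) (i j : Fin k) :
    symplecticForm (genericCovector n k i) (genericCovector n k j) ∈
      idealOfVars (Fin k × Fin (2 * n)) Kc := by
  have hX (x : Fin k × Fin (2 * n)) : (X x : Tens n k) ∈ idealOfVars _ Kc :=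
    Ideal.subset_span ⟨x, rfl⟩
  rw [symplecticForm_apply]
  exact Submodule.smul_of_tower_mem _ _ <| Ideal.sum_mem _ fun r _ =>
    Ideal.sub_mem _ (Ideal.mul_mem_left _ _ (hX _)) (Ideal.mul_mem_left _ _ (hX _))

lemma prod_symplecticForm_pow_mem (n k : ℕ) (K : Pairs k → ℕ) :
    ∏ p : Pairs k, symplecticForm (genericCovector n k p.1.1) (genericCovector n k p.1.2) ^ K p ∈
      idealOfVars (Fin k × Fin (2 * n)) Kc ^ (∑ p, K p) := by
  rw [← Finset.prod_pow_eq_pow_sum]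
  exact Ideal.prod_mem_prod fun p _ =>
    Ideal.pow_mem_pow (symplecticForm_genericCovector_mem _ _ _ _) _

lemma expIntegral_genericCovector_mem (n m : ℕ) :
    expIntegral m (genericCovector n (2 * n + 1)) ∈
      idealOfVars (Fin (2 * n + 1) × Fin (2 * n)) Kc ^ m := by
  rw [expIntegral_eq_sum_piAntidiag]
  refine Ideal.sum_mem _ fun K hK => Submodule.smul_of_tower_mem _ _ ?_
  exact (Finset.mem_piAntidiag.1 hK).1 ▸ prod_symplecticForm_pow_mem n _ K

lemma tauSymbol_mem (n m : ℕ) :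
    tauSymbol n m ∈ idealOfVars (Fin (2 * n + 1) × Fin (2 * n)) Kc ^ m :=
  Ideal.mul_mem_left _ _ (expIntegral_genericCovector_mem n m)

lemma sum_piFinset_range_eq_sum_piAntidiag {ι M : Type*} [Fintype ι] [DecidableEq ι]
    [AddCommMonoid M] {f : (ι → ℕ) → M} {d N : ℕ} (hdN : d < N)
    (hf : ∀ K, d < ∑ i, K i → f K = 0) :
    ∑ K ∈ Fintype.piFinset fun _ => Finset.range (d + 1), f K =
      ∑ m ∈ Finset.range N, ∑ K ∈ Finset.univ.piAntidiag m, f K := by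
  rw [← Finset.sum_biUnion fun m _ m' _ hne => Finset.disjoint_left.2 fun K hK hK' =>
    hne ((Finset.mem_piAntidiag.1 hK).1.symm.trans (Finset.mem_piAntidiag.1 hK').1)]
  have hle (K : ι → ℕ) (i : ι) : K i ≤ ∑ i, K i :=
    Finset.single_le_sum (fun _ _ => Nat.zero_le _) (Finset.mem_univ i)
  have hbox {K : ι → ℕ} (hK : ∑ i, K i ≤ d) :
      K ∈ Fintype.piFinset fun _ => Finset.range (d + 1) := by
    simpa [Nat.lt_succ_iff] using fun i => (hle K i).trans hK
  have hunion {K : ι → ℕ} (hK : ∑ i, K i ≤ d) :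
      K ∈ (Finset.range N).biUnion fun m => Finset.univ.piAntidiag m := by
    simpa using hK.trans_lt hdN
  rw [← Finset.sum_filter_of_ne (p := fun K => ∑ i, K i ≤ d)
      fun K _ hK => not_lt.1 (mt (hf K) hK),
    ← Finset.sum_filter_of_ne (s := Finset.biUnion _ _) (p := fun K => ∑ i, K i ≤ d)
      fun K _ hK => not_lt.1 (mt (hf K) hK)]
  congr 1
  ext K
  simp only [Finset.mem_filter]
  exact ⟨fun h => ⟨hunion h.2, h.2⟩, fun h => ⟨hbox h.2, h.2⟩⟩

theorem tau_eq_sum_tauSymbol (n : ℕ) {a : Tens n (2 * n + 1)} {M : ℕ} (hM : a.totalDegree < M) :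
    tau n a = ∑ m ∈ Finset.range M, eps ^ m * constantCoeff (diffOp (tauSymbol n m) a) := by
  let P (K : Pairs (2 * n + 1) → ℕ) : Tens n (2 * n + 1) :=
    tailDet (genericCovector n (2 * n + 1)) * ∏ p : Pairs (2 * n + 1),
      symplecticForm (genericCovector n _ p.1.1) (genericCovector n _ p.1.2) ^ K p
  let T (K : Pairs (2 * n + 1) → ℕ) : Kc :=
    eps ^ (∑ p, K p) * constantCoeff (diffOp (simplexCoeff (2 * n) K • P K) a)
  have hvanish (K) (hK : a.totalDegree < ∑ p, K p) : T K = 0 := by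
    simp only [T]
    rw [diffOp_eq_zero_of_totalDegree_lt _ hK, map_zero, mul_zero]
    exact Submodule.smul_of_tower_mem _ _
      (Ideal.mul_mem_left _ _ (prod_symplecticForm_pow_mem n _ K))
  have htau : tau n a = ∑ K ∈ Fintype.piFinset fun _ => Finset.range (a.totalDegree + 1), T K := by
    refine Finset.sum_congr rfl fun K _ => ?_
    simp only [T, P]
    rw [alphaPowProd_eq_diffOp, piOp_eq_diffOp, ← diffOp_mul_apply, diffOp_real_smul, simplexCoeff,
      mul_comm (tailDet _)]
    simp
    ring
  rw [htau, sum_piFinset_range_eq_sum_piAntidiag hM hvanish]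
  refine Finset.sum_congr rfl fun m _ => ?_
  rw [tauSymbol, expIntegral_eq_sum_piAntidiag, Finset.mul_sum, map_sum, LinearMap.sum_apply,
    map_sum, Finset.mul_sum]
  refine Finset.sum_congr rfl fun K hK => ?_
  simp only [T, P]
  rw [(Finset.mem_piAntidiag.1 hK).1, mul_smul_comm]

end TauSymbol

/-- `τ` as a linear map. -/
def tauLinear (n : ℕ) : Tens n (2 * n + 1) →ₗ[Kc] Kc where
  toFun := tau n
  map_add' a b := by
    have hM {c} (hc : c ≤ max a.totalDegree b.totalDegree) := Nat.lt_succ_of_le hc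
    rw [tau_eq_sum_tauSymbol n (hM (totalDegree_add a b)),
      tau_eq_sum_tauSymbol n (hM (le_max_left _ _)), tau_eq_sum_tauSymbol n (hM (le_max_right _ _))]
    simp [mul_add, Finset.sum_add_distrib]
  map_smul' c a := by
    rw [tau_eq_sum_tauSymbol n (Nat.lt_succ_of_le (totalDegree_smul_le c a)),
      tau_eq_sum_tauSymbol n (Nat.lt_succ_self a.totalDegree)]
    simp [Finset.mul_sum, mul_left_comm]

/-! ### The Hochschild cocycle property of `τ` -/

/-- The truncation of the symbol `exp (ε P)` below order `M` in `ε`. -/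
def truncExp {σ : Type*} (M : ℕ) (P : MvPolynomial σ Kc) : MvPolynomial σ Kc :=
  ∑ l ∈ Finset.range M, eps ^ l • ((l.factorial⁻¹ : ℝ) • P ^ l)

section TruncExp

variable {σ σ' : Type*} {M : ℕ}

lemma map_truncExp (f : MvPolynomial σ Kc →ₐ[Kc] MvPolynomial σ' Kc) (P : MvPolynomial σ Kc) :
    f (truncExp M P) = truncExp M (f P) := by
  simp only [truncExp, map_sum, map_smul]
  exact Finset.sum_congr rfl fun l _ => by
    rw [← map_pow, ← AlgHom.coe_restrictScalars' ℝ f, map_smul]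

lemma truncExp_mem_supported {s : Set σ} {P : MvPolynomial σ Kc} (hP : P ∈ supported Kc s) :
    truncExp M P ∈ supported Kc s :=
  Subalgebra.sum_mem _ fun l _ => Subalgebra.smul_mem _
    (Submodule.smul_of_tower_mem (Subalgebra.toSubmodule _) _ (Subalgebra.pow_mem _ hP l)) _

lemma expEps_diffOp {n k : ℕ} {P : Tens n k} (hP : P ∈ idealOfVars _ Kc) {a : Tens n k}
    (hM : a.totalDegree < M) : expEps (diffOp P) a = diffOp (truncExp M P) a := by
  have hterm (l : ℕ) : (algebraMap ℂ Kc (l.factorial : ℂ)⁻¹ * eps ^ l) • (diffOp P ^ l) a =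
      diffOp (eps ^ l • ((l.factorial⁻¹ : ℝ) • P ^ l)) a := by
    rw [map_smul, LinearMap.smul_apply, diffOp_real_smul, map_pow, smul_smul,
      mul_comm (eps ^ l)]
    simp
  simp only [truncExp, map_sum, LinearMap.sum_apply, expEps, hterm]
  refine Finset.sum_subset (Finset.range_subset_range.2 hM) fun l _ hl => ?_
  rw [← hterm, ← map_pow, diffOp_eq_zero_of_totalDegree_lt (Ideal.pow_mem_pow hP l), smul_zero]
  simpa using hl

end TruncExp

/-- The Hochschild faces of a cyclic word, multiplying the cyclically neighbouring letters `j` and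
`j + 1` by `μ`. -/
def cyclicFace {B : Type*} (μ : B → B → B) {k : ℕ} (j : Fin (k + 2)) (a : Fin (k + 2) → B) :
    Fin (k + 1) → B :=
  fun c => if c = mergeIndex j j then μ (a j) (a (j + 1)) else a (j.succAbove c)

section CyclicFace

variable {k : ℕ}

lemma mergeIndex_succAbove (j : Fin (k + 2)) (c : Fin (k + 1)) :
    mergeIndex j (j.succAbove c) = c := by
  have := c.2
  have := j.2
  simp only [Fin.ext_iff, mergeIndex_val, Fin.succAbove, Fin.lt_def, Fin.val_castSucc]
  split_ifs <;> simp_all <;> omega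

lemma succAbove_mergeIndex_self (j : Fin (k + 2)) : j.succAbove (mergeIndex j j) = j + 1 := by
  have hj : (j + 1).1 = if j.1 = k + 1 then 0 else j.1 + 1 := by
    simp [Fin.val_add_one, Fin.ext_iff]
  have hmerge : (mergeIndex j j).1 = if j.1 = k + 1 then 0 else j.1 := by simp [mergeIndex_val]
  rw [Fin.ext_iff, hj, Fin.succAbove, apply_ite Fin.val]
  simp only [Fin.lt_def, Fin.val_castSucc, Fin.val_succ, hmerge]
  split_ifs <;> omega

lemma mergeIndex_add_one_self (j : Fin (k + 2)) : mergeIndex j (j + 1) = mergeIndex j j := by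
  rw [← succAbove_mergeIndex_self, mergeIndex_succAbove]

variable {B : Type*} (μ : B → B → B) (j : Fin (k + 2)) (a : Fin (k + 2) → B)

lemma cyclicFace_mergeIndex_self : cyclicFace μ j a (mergeIndex j j) = μ (a j) (a (j + 1)) :=
  if_pos rfl

lemma cyclicFace_of_ne {c : Fin (k + 1)} (hc : c ≠ mergeIndex j j) :
    cyclicFace μ j a c = a (j.succAbove c) :=
  if_neg hc

end CyclicFace

section Moyal

variable {n k M : ℕ}

lemma symplecticForm_genericCovector_mem_supported (i j : Fin k) :
    symplecticForm (genericCovector n k i) (genericCovector n k j) ∈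
      supported Kc {x | x.1 = i ∨ x.1 = j} := by
  rw [symplecticForm_apply, ← algebraMap_smul Kc]
  refine Subalgebra.smul_mem _ (Subalgebra.sum_mem _ fun r _ =>
    Subalgebra.sub_mem _ (Subalgebra.mul_mem _ ?_ ?_)
      (Subalgebra.mul_mem _ ?_ ?_)) _
  all_goals exact X_mem_supported.2 (by simp)

lemma symbolPullback_genericCovector {l : ℕ} (f : Fin l → Fin k) (c : Fin k) (v : Fin (2 * n)) :
    symbolPullback (Prod.map f id) (genericCovector n k c v) =
      ∑ a with f a = c, genericCovector n l a v := by
  have hfibre : (Finset.univ.filter fun x : Fin l × Fin (2 * n) => Prod.map f id x = (c, v)) =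
      (Finset.univ.filter fun a => f a = c) ×ˢ {v} := by
    ext; simp [Prod.ext_iff, eq_comm (a := v)]
  simp [genericCovector, symbolPullback_X, hfibre]

lemma symbolPullback_symplecticForm {l : ℕ} (f : Fin l → Fin k) (i j : Fin k) :
    symbolPullback (Prod.map f id)
      (symplecticForm (genericCovector n k i) (genericCovector n k j)) =
        symplecticForm (fun v => ∑ a with f a = i, genericCovector n l a v)
          fun v => ∑ a with f a = j, genericCovector n l a v := by
  simpa only [AlgHom.coe_restrictScalars', symbolPullback_genericCovector] using
    map_symplecticForm ((symbolPullback (R := Kc) (Prod.map f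
      (id : Fin (2 * n) → Fin (2 * n)))).restrictScalars ℝ)
      (genericCovector n k i) (genericCovector n k j)

lemma symbolPullback_tauSymbol (m : ℕ) (j : Fin (2 * n + 2)) :
    symbolPullback (Prod.map (mergeIndex j) id) (tauSymbol n m) =
      tailDet (mergeAt (genericCovector n (2 * n + 2)) j) *
        expIntegral m (mergeAt (genericCovector n (2 * n + 2)) j) := by
  let f := (symbolPullback (R := Kc) (Prod.map (mergeIndex j)
    (id : Fin (2 * n) → Fin (2 * n)))).restrictScalars ℝ
  have hf (a : Fin (2 * n + 1)) (v : Fin (2 * n)) : f (genericCovector n (2 * n + 1) a v) =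
      mergeAt (genericCovector n (2 * n + 2)) j a v := by
    simp [f, symbolPullback_genericCovector, mergeAt]
  change f _ = _
  rw [tauSymbol, map_mul, tailDet, AlgHom.map_det, map_expIntegral]
  simp only [hf]
  congr 1
  exact congrArg Matrix.det (Matrix.ext fun a v => hf _ _)

lemma moyal_eq_rename {f g : Apol n} (hM : (elemT ![f, g]).totalDegree < M) :
    moyal n f g = rename Prod.snd (diffOp (truncExp M
      (symplecticForm (genericCovector n 2 0) (genericCovector n 2 1))) (elemT ![f, g])) := by
  rw [moyal, alphaOp_eq_diffOp, expEps_diffOp (symplecticForm_genericCovector_mem n 2 0 1) hM]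
  exact DFunLike.congr_fun (algHom_ext fun v => by simp) _

lemma pderiv_embA_of_ne {i c : Fin k} (hic : i ≠ c) (v : Fin (2 * n)) (a : Apol n) :
    pderiv (i, v) (embA n k c a) = 0 :=
  pderiv_rename_of_notMem_range _ (fun ⟨_, hw⟩ => hic (congrArg Prod.fst hw).symm) a

lemma pderiv_prod_embA_eq_zero {s : Finset (Fin k)} {i : Fin k} (hi : i ∉ s) (v : Fin (2 * n))
    (a : Fin k → Apol n) : pderiv (i, v) (∏ c ∈ s, embA n k c (a c)) = 0 := by
  refine Finset.prod_induction _ (fun y => pderiv (i, v) y = 0) (fun y z hy hz => ?_) (by simp)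
    fun c hc => pderiv_embA_of_ne (ne_of_mem_of_not_mem hc hi).symm v _
  rw [Derivation.leibniz, hy, hz, smul_zero, smul_zero, add_zero]

lemma self_ne_add_one (j : Fin (k + 2)) : j ≠ j + 1 := by
  rw [← succAbove_mergeIndex_self]
  exact (Fin.succAbove_ne _ _).symm

lemma elemT_eq_mul_prod_compl (j : Fin (k + 2)) (a : Fin (k + 2) → Apol n) :
    elemT a = rename (Prod.map ![j, j + 1] id) (elemT ![a j, a (j + 1)]) *
      ∏ i ∈ {j, j + 1}ᶜ, embA n (k + 2) i (a i) := by
  rw [elemT, ← Finset.prod_mul_prod_compl {j, j + 1}, Finset.prod_pair (self_ne_add_one j), elemT,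
    Fin.prod_univ_two, map_mul]
  simp only [embA, rename_rename]
  rfl

lemma rename_prod_compl (j : Fin (k + 2)) (a : Fin (k + 2) → Apol n) :
    rename (Prod.map (mergeIndex j) id) (∏ i ∈ {j, j + 1}ᶜ, embA n (k + 2) i (a i)) =
      ∏ c ∈ {mergeIndex j j}ᶜ, embA n (k + 1) c (a (j.succAbove c)) := by
  have hcompl : ({j, j + 1}ᶜ : Finset (Fin (k + 2))) =
      Finset.map j.succAboveEmb {mergeIndex j j}ᶜ := by
    ext i
    rcases Fin.eq_self_or_eq_succAbove j i with rfl | ⟨c, rfl⟩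
    · simp [Fin.succAbove_ne]
    · simp [← succAbove_mergeIndex_self, Fin.succAbove_ne]
  rw [hcompl, Finset.prod_map, map_prod]
  refine Finset.prod_congr rfl fun c _ => ?_
  rw [embA, embA, rename_rename]
  congr 2
  funext v
  simp [mergeIndex_succAbove]

lemma symbolPullback_symplecticForm_pair (j : Fin (k + 2)) :
    symbolPullback (Prod.map ![j, j + 1] id)
      (symplecticForm (genericCovector n (k + 2) j) (genericCovector n (k + 2) (j + 1))) =
        symplecticForm (genericCovector n 2 0) (genericCovector n 2 1) := by
  simp [symbolPullback_symplecticForm, Finset.sum_filter, Fin.sum_univ_two,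
    (self_ne_add_one j).symm]

lemma elemT_cyclicFace (j : Fin (k + 2)) (a : Fin (k + 2) → Apol n)
    (hM : (elemT ![a j, a (j + 1)]).totalDegree < M) :
    elemT (cyclicFace (moyal n) j a) = rename (Prod.map (mergeIndex j) id)
      (diffOp (truncExp M (symplecticForm (genericCovector n (k + 2) j)
        (genericCovector n (k + 2) (j + 1)))) (elemT a)) := by
  have hcomp : Prod.map (mergeIndex j) id ∘ Prod.map ![j, j + 1] id =
      fun x : Fin 2 × Fin (2 * n) => (mergeIndex j j, x.2) := by
    funext ⟨i, v⟩
    fin_cases i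
    · rfl
    · simp [mergeIndex_add_one_self]
  have hR (x) (hx : x ∈ {x : Fin (k + 2) × Fin (2 * n) | x.1 = j ∨ x.1 = j + 1}) :
      pderiv x (∏ i ∈ {j, j + 1}ᶜ, embA n (k + 2) i (a i)) = 0 :=
    pderiv_prod_embA_eq_zero (by simpa [or_iff_not_imp_left] using hx) x.2 a
  rw [elemT_eq_mul_prod_compl j a, diffOp_mul_of_mem_supported (truncExp_mem_supported
    (symplecticForm_genericCovector_mem_supported _ _)) hR, map_mul, rename_prod_compl,
    diffOp_rename, map_truncExp, symbolPullback_symplecticForm_pair, rename_rename, hcomp, elemT,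
    Fintype.prod_eq_mul_prod_compl (mergeIndex j j), cyclicFace_mergeIndex_self,
    moyal_eq_rename hM, embA, rename_rename]
  congr 1
  refine Finset.prod_congr rfl fun c hc => ?_
  rw [cyclicFace_of_ne _ _ _ (by simpa using hc)]

end Moyal

lemma sum_range_sum_range_eq_sum_antidiagonal {β : Type*} [AddCommMonoid β] {M : ℕ}
    {F : ℕ → ℕ → β} (hF : ∀ l m, M ≤ l + m → F l m = 0) :
    ∑ l ∈ Finset.range M, ∑ m ∈ Finset.range M, F l m =
      ∑ t ∈ Finset.range M, ∑ q ∈ Finset.HasAntidiagonal.antidiagonal t, F q.1 q.2 := by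
  simp only [Finset.Nat.sum_antidiagonal_eq_sum_range_succ F]
  rw [Finset.sum_range_diag_flip]
  refine Finset.sum_congr rfl fun l _ =>
    (Finset.sum_subset (Finset.range_subset_range.2 (M.sub_le l)) fun m _ hm => hF l m ?_).symm
  simp only [Finset.mem_range] at hm
  omega

lemma tau_elemT_cyclicFace {n M : ℕ} (j : Fin (2 * n + 2)) (a : Fin (2 * n + 2) → Apol n)
    (ha : (elemT a).totalDegree < M) (hpair : (elemT ![a j, a (j + 1)]).totalDegree < M)
    (hface : (elemT (cyclicFace (moyal n) j a)).totalDegree < M) :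
    tau n (elemT (cyclicFace (moyal n) j a)) =
      ∑ t ∈ Finset.range M, eps ^ t * constantCoeff (diffOp
        (∑ q ∈ Finset.HasAntidiagonal.antidiagonal t,
          ((q.1.factorial⁻¹ : ℝ) • symplecticForm (genericCovector n (2 * n + 2) j)
            (genericCovector n (2 * n + 2) (j + 1)) ^ q.1) *
          (tailDet (mergeAt (genericCovector n (2 * n + 2)) j) *
            expIntegral q.2 (mergeAt (genericCovector n (2 * n + 2)) j))) (elemT a)) := by
  let S (m : ℕ) := symbolPullback (Prod.map (mergeIndex j) id) (tauSymbol n m)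
  let E (l : ℕ) := (l.factorial⁻¹ : ℝ) • symplecticForm (genericCovector n (2 * n + 2) j)
    (genericCovector n (2 * n + 2) (j + 1)) ^ l
  let F (l m : ℕ) := eps ^ (l + m) * constantCoeff (diffOp (E l * S m) (elemT a))
  have hF (l m) (hlm : M ≤ l + m) : F l m = 0 := by
    have hE : E l ∈ idealOfVars _ Kc ^ l := Submodule.smul_of_tower_mem _ _
      (Ideal.pow_mem_pow (symplecticForm_genericCovector_mem _ _ _ _) l)
    have hS : S m ∈ idealOfVars _ Kc ^ m := symbolPullback_mem_pow_idealOfVars _ (tauSymbol_mem n m)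
    simp only [F]
    rw [diffOp_eq_zero_of_totalDegree_lt (pow_add (idealOfVars _ Kc) l m ▸ Ideal.mul_mem_mul hE hS)
      (ha.trans_le hlm), map_zero, mul_zero]
  calc
    _ = ∑ m ∈ Finset.range M, ∑ l ∈ Finset.range M, F l m := by
      rw [tau_eq_sum_tauSymbol n hface, elemT_cyclicFace j a hpair]
      refine Finset.sum_congr rfl fun m _ => ?_
      rw [diffOp_rename, constantCoeff_rename, ← diffOp_mul_apply, truncExp, Finset.mul_sum,
        map_sum, LinearMap.sum_apply, map_sum, Finset.mul_sum]
      refine Finset.sum_congr rfl fun l _ => ?_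
      simp only [F, S, E, mul_smul_comm, map_smul, LinearMap.smul_apply, constantCoeff_smul]
      rw [mul_comm (symbolPullback _ _)]
      simp [pow_add]
      ring
    _ = _ := by
      rw [Finset.sum_comm, sum_range_sum_range_eq_sum_antidiagonal hF]
      refine Finset.sum_congr rfl fun t _ => ?_
      simp only [map_sum, LinearMap.sum_apply, Finset.mul_sum]
      refine Finset.sum_congr rfl fun q hq => ?_
      simp only [F, S, E]
      rw [symbolPullback_tauSymbol, Finset.HasAntidiagonal.mem_antidiagonal.1 hq]

theorem sum_neg_one_pow_mul_tau_cyclicFace (n : ℕ) (a : Fin (2 * n + 2) → Apol n) :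
    ∑ j : Fin (2 * n + 2), (-1) ^ j.1 * tau n (elemT (cyclicFace (moyal n) j a)) = 0 := by
  obtain ⟨M, hM⟩ := Finset.exists_nat_subset_range (insert (elemT a).totalDegree
    (Finset.univ.image (fun j => (elemT ![a j, a (j + 1)]).totalDegree) ∪
      Finset.univ.image fun j => (elemT (cyclicFace (moyal n) j a)).totalDegree))
  simp only [Finset.insert_subset_iff, Finset.union_subset_iff, Finset.image_subset_iff,
    Finset.mem_range, Finset.mem_univ, true_imp_iff] at hM
  obtain ⟨ha, hpair, hface⟩ := hM
  simp only [fun j => tau_elemT_cyclicFace j a ha (hpair j) (hface j), Finset.mul_sum]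
  rw [Finset.sum_comm]
  refine Finset.sum_eq_zero fun t _ => ?_
  have h := congrArg (fun P => eps ^ t * constantCoeff (diffOp P (elemT a)))
    (sum_neg_one_pow_mul_symbol_mergeAt (genericCovector n (2 * n + 2)) t)
  simp only [map_zero, LinearMap.zero_apply, mul_zero] at h
  rw [map_sum, LinearMap.sum_apply, map_sum, Finset.mul_sum] at h
  refine (Finset.sum_congr rfl fun j _ => ?_).trans h
  have hsign : ((-1) ^ j.1 : Tens n (2 * n + 2)) = C ((-1) ^ j.1) := by simp
  rw [hsign, ← smul_eq_C_mul, map_smul, LinearMap.smul_apply, constantCoeff_smul, smul_eq_mul,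
    mul_left_comm]

/-! ### The matrix version of `τ` -/

section CyclicFace

variable {k : ℕ}

lemma mergeIndex_add_one {i j : Fin (k + 2)} (hij : i ≠ j) :
    mergeIndex j (i + 1) = mergeIndex j i + 1 := by
  have := i.2
  have := j.2
  have hval : i.1 ≠ j.1 := Fin.val_ne_of_ne hij
  simp only [Fin.ext_iff, mergeIndex_val, Fin.val_add_one, Fin.val_last]
  split_ifs <;> omega

lemma succAbove_add_one_ne (j : Fin (k + 2)) (c : Fin (k + 1)) : j.succAbove c + 1 ≠ j + 1 :=
  fun h => Fin.succAbove_ne j c (add_right_cancel h)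

lemma succAbove_ne_add_one {j : Fin (k + 2)} {c : Fin (k + 1)} (hc : c ≠ mergeIndex j j) :
    j.succAbove c ≠ j + 1 := by
  rw [← succAbove_mergeIndex_self]
  exact fun h => hc (Fin.succAbove_right_injective h)

/-- A cyclic word of length `k + 2` is the same as a word of length `k + 1` for the `j`-th cyclic
face together with the letter in position `j + 1`. It describes the matrix indices in the `j`-th
face of a tuple of matrices, where the extra letter is the one summed over in the product. -/
def insertIndexEquiv {ι : Type*} (j : Fin (k + 2)) :
    (Fin (k + 1) → ι) × ι ≃ (Fin (k + 2) → ι) where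
  toFun q := Function.update (q.1 ∘ mergeIndex j) (j + 1) q.2
  invFun r := (cyclicFace (fun x _ => x) j r, r (j + 1))
  left_inv := fun ⟨s, l⟩ => by
    refine Prod.ext (funext fun c => ?_) (by simp)
    rcases eq_or_ne c (mergeIndex j j) with rfl | hc
    · simp [cyclicFace_mergeIndex_self]
    · simp [cyclicFace_of_ne _ _ _ hc, Function.update_of_ne (succAbove_ne_add_one hc),
        mergeIndex_succAbove]
  right_inv r := by
    funext i
    rcases eq_or_ne i (j + 1) with rfl | hi
    · simp
    rcases eq_or_ne i j with rfl | hij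
    · simp [cyclicFace_mergeIndex_self]
    obtain ⟨c, rfl⟩ := Fin.exists_succAbove_eq hij
    have hc : c ≠ mergeIndex j j := by
      rintro rfl
      exact hi (succAbove_mergeIndex_self j)
    simp [Function.update_of_ne hi, mergeIndex_succAbove, cyclicFace_of_ne _ _ _ hc]

end CyclicFace

/-- The elementary tensor `a_0 ⊗ ⋯ ⊗ a_{k-1}` as a multilinear function of its factors. -/
def elemTMultilinear (n k : ℕ) : MultilinearMap Kc (fun _ : Fin k => Apol n) (Tens n k) :=
  (MultilinearMap.mkPiAlgebra Kc (Fin k) (Tens n k)).compLinearMap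
    fun i => (embA n k i).toLinearMap

/-- The cochain `τ_{2n}` on `A` as a multilinear map. -/
def tauMultilinear (n : ℕ) : MultilinearMap Kc (fun _ : Fin (2 * n + 1) => Apol n) Kc :=
  (tauLinear n).compMultilinearMap (elemTMultilinear n (2 * n + 1))

lemma tauMultilinear_apply (n : ℕ) (a : Fin (2 * n + 1) → Apol n) :
    tauMultilinear n a = tau n (elemT a) := by
  simp [tauMultilinear, tauLinear, elemTMultilinear, elemT]

/-- The extension of `τ_{2n}` to matrices over `A` by the trace of a product of matrices. -/
def tauMatrix (n N : ℕ) : MultilinearMap Kc (fun _ : Fin (2 * n + 1) => glA n N) Kc :=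
  ∑ r : Fin (2 * n + 1) → Fin N, (tauMultilinear n).compLinearMap
    fun c => Matrix.entryLinearMap Kc (Apol n) (r c) (r (c + 1))

lemma tauMatrix_apply (n N : ℕ) (x : Fin (2 * n + 1) → glA n N) :
    tauMatrix n N x =
      ∑ r : Fin (2 * n + 1) → Fin N, tauMultilinear n fun c => x c (r c) (r (c + 1)) := by
  rw [tauMatrix, sum_apply]
  rfl

lemma tauMatrix_cyclicFace (n N : ℕ) (j : Fin (2 * n + 2)) (x : Fin (2 * n + 2) → glA n N) :
    tauMatrix n N (cyclicFace (matMul n N) j x) =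
      ∑ r : Fin (2 * n + 2) → Fin N,
        tauMultilinear n (cyclicFace (moyal n) j fun c => x c (r c) (r (c + 1))) := by
  rw [← Equiv.sum_comp (insertIndexEquiv j), Fintype.sum_prod_type, tauMatrix_apply]
  refine Finset.sum_congr rfl fun s _ => ?_
  set m := mergeIndex j j
  set rest : Fin (2 * n + 1) → Apol n := fun c => x (j.succAbove c) (s c) (s (c + 1))
  have hface : (fun c => cyclicFace (matMul n N) j x c (s c) (s (c + 1))) =
      Function.update rest m (∑ l, moyal n (x j (s m) l) (x (j + 1) l (s (m + 1)))) := by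
    funext c
    rcases eq_or_ne c m with rfl | hc
    · rw [cyclicFace_mergeIndex_self, Function.update_self, matMul]
    · rw [Function.update_of_ne hc, cyclicFace_of_ne _ _ _ hc]
  rw [hface, MultilinearMap.map_update_sum]
  refine Finset.sum_congr rfl fun l _ => congrArg _ (funext fun c => ?_)
  simp only [insertIndexEquiv, Equiv.coe_fn_mk]
  rcases eq_or_ne c m with rfl | hc
  · rw [Function.update_self, cyclicFace_mergeIndex_self, Function.update_self,
      Function.update_of_ne (self_ne_add_one j), Function.update_of_ne (self_ne_add_one _).symm,
      Function.comp, Function.comp, mergeIndex_add_one (self_ne_add_one j).symm,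
      mergeIndex_add_one_self]
  · rw [Function.update_of_ne hc, cyclicFace_of_ne _ _ _ hc,
      Function.update_of_ne (succAbove_ne_add_one hc),
      Function.update_of_ne (succAbove_add_one_ne j c), Function.comp, Function.comp,
      mergeIndex_add_one (Fin.succAbove_ne j c), mergeIndex_succAbove]

theorem sum_neg_one_pow_mul_tauMatrix_cyclicFace (n N : ℕ) (x : Fin (2 * n + 2) → glA n N) :
    ∑ j : Fin (2 * n + 2), (-1) ^ j.1 * tauMatrix n N (cyclicFace (matMul n N) j x) = 0 := by
  simp only [tauMatrix_cyclicFace, Finset.mul_sum]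
  rw [Finset.sum_comm]
  simp only [tauMultilinear_apply, sum_neg_one_pow_mul_tau_cyclicFace, Finset.sum_const_zero]

/-! ### From cyclic Hochschild cocycles to Chevalley–Eilenberg cocycles -/

section Antisymmetrization

variable {G R : Type*} [CommRing R] {m : ℕ}

/-- The sum of `F` over all permutations of its arguments, weighted by their signs. Unlike for
`MultilinearMap.alternatization`, `F` is an arbitrary function. -/
def antisymmetrization (F : (Fin m → G) → R) (v : Fin m → G) : R :=
  ∑ σ : Equiv.Perm (Fin m), Equiv.Perm.sign σ • F (v ∘ σ)

/-- The permutation of `{0, …, m}` that sends `p` to `i` and induces `π` between the complements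
of `p` and `i`. -/
def insertPerm (p i : Fin (m + 1)) (π : Equiv.Perm (Fin m)) : Equiv.Perm (Fin (m + 1)) :=
  i.cycleRange.symm * Equiv.Perm.decomposeFin.symm (0, π) * p.cycleRange

lemma insertPerm_apply_self (p i : Fin (m + 1)) (π : Equiv.Perm (Fin m)) :
    insertPerm p i π p = i := by
  simp [insertPerm]

lemma insertPerm_apply_succAbove (p i : Fin (m + 1)) (π : Equiv.Perm (Fin m)) (a : Fin m) :
    insertPerm p i π (p.succAbove a) = i.succAbove (π a) := by
  simp [insertPerm]

lemma sign_insertPerm (p i : Fin (m + 1)) (π : Equiv.Perm (Fin m)) :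
    Equiv.Perm.sign (insertPerm p i π) = (-1) ^ (i.1 + p.1) * Equiv.Perm.sign π := by
  simp [insertPerm, Fin.sign_cycleRange, pow_add, mul_right_comm]

lemma insertPerm_injective (p i : Fin (m + 1)) : Function.Injective (insertPerm p i) :=
  fun π π' h => by simpa [insertPerm] using h

lemma insertPerm_bijective_of_source (p : Fin (m + 1)) :
    Function.Bijective fun q : Fin (m + 1) × Equiv.Perm (Fin m) => insertPerm p q.1 q.2 := by
  refine (Fintype.bijective_iff_injective_and_card _).2
    ⟨?_, by simp [Fintype.card_perm, Nat.factorial_succ]⟩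
  rintro ⟨i, π⟩ ⟨i', π'⟩ h
  obtain rfl : i = i' := by
    simpa [insertPerm_apply_self] using DFunLike.congr_fun h p
  exact congrArg _ (insertPerm_injective p i h)

lemma insertPerm_bijective_of_target (i : Fin (m + 1)) :
    Function.Bijective fun q : Fin (m + 1) × Equiv.Perm (Fin m) => insertPerm q.1 i q.2 := by
  refine (Fintype.bijective_iff_injective_and_card _).2
    ⟨?_, by simp [Fintype.card_perm, Nat.factorial_succ]⟩
  rintro ⟨p, π⟩ ⟨p', π'⟩ h
  obtain rfl : p = p' := (insertPerm p i π).injective <| by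
    rw [insertPerm_apply_self]
    exact (insertPerm_apply_self p' i π').symm.trans (DFunLike.congr_fun h p').symm
  exact congrArg _ (insertPerm_injective p i h)

lemma comp_insertPerm (p i : Fin (m + 1)) (π : Equiv.Perm (Fin m)) (v : Fin (m + 1) → G) :
    v ∘ insertPerm p i π = p.insertNth (v i) ((v ∘ i.succAbove) ∘ π) := by
  refine (Fin.insertNth_eq_iff.2 ⟨by simp [insertPerm_apply_self], ?_⟩).symm
  funext a
  simp [insertPerm_apply_succAbove, Fin.removeNth]

lemma sum_sign_insertPerm_smul (F : (Fin (m + 1) → G) → R) (v : Fin (m + 1) → G)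
    (p i : Fin (m + 1)) :
    ∑ π, Equiv.Perm.sign (insertPerm p i π) • F (v ∘ insertPerm p i π) =
      (-1) ^ (i.1 + p.1) *
        antisymmetrization (fun u => F (p.insertNth (v i) u)) (v ∘ i.succAbove) := by
  rw [antisymmetrization, Finset.mul_sum]
  refine Finset.sum_congr rfl fun π _ => ?_
  rw [sign_insertPerm, comp_insertPerm]
  simp [Units.smul_def, mul_assoc]

lemma antisymmetrization_eq_sum_of_position (F : (Fin (m + 1) → G) → R) (v : Fin (m + 1) → G)
    (p : Fin (m + 1)) :
    antisymmetrization F v = ∑ i : Fin (m + 1), (-1) ^ (i.1 + p.1) *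
      antisymmetrization (fun u => F (p.insertNth (v i) u)) (v ∘ i.succAbove) := by
  rw [antisymmetrization, ← (insertPerm_bijective_of_source p).sum_comp, Fintype.sum_prod_type]
  exact Finset.sum_congr rfl fun i _ => sum_sign_insertPerm_smul F v p i

lemma antisymmetrization_eq_sum_of_argument (F : (Fin (m + 1) → G) → R) (v : Fin (m + 1) → G)
    (i : Fin (m + 1)) :
    antisymmetrization F v = ∑ p : Fin (m + 1), (-1) ^ (i.1 + p.1) *
      antisymmetrization (fun u => F (p.insertNth (v i) u)) (v ∘ i.succAbove) := by
  rw [antisymmetrization, ← (insertPerm_bijective_of_target i).sum_comp, Fintype.sum_prod_type]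
  exact Finset.sum_congr rfl fun p _ => sum_sign_insertPerm_smul F v p i

lemma antisymmetrization_cons (F : (Fin (m + 1) → G) → R) (z : G) (u : Fin m → G) :
    antisymmetrization F (Fin.cons z u) =
      ∑ p : Fin (m + 1), (-1) ^ p.1 * antisymmetrization (fun u => F (p.insertNth z u)) u := by
  have htail : (Fin.cons z u : Fin (m + 1) → G) ∘ Fin.succ = u := rfl
  simpa [htail] using antisymmetrization_eq_sum_of_argument F (Fin.cons z u) 0

lemma antisymmetrization_sum_mul {ι : Type*} (s : Finset ι) (c : ι → R)
    (F : ι → (Fin m → G) → R) (v : Fin m → G) :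
    antisymmetrization (fun u => ∑ i ∈ s, c i * F i u) v =
      ∑ i ∈ s, c i * antisymmetrization (F i) v := by
  simp only [antisymmetrization, Finset.mul_sum, Finset.smul_sum, mul_smul_comm]
  exact Finset.sum_comm

end Antisymmetrization

section ChevalleyEilenberg

variable {G R : Type*} [CommRing R] (μ : G → G → G) {k : ℕ}

/-- The tuple obtained by multiplying the entries in positions `p` and `p + 1`. -/
def mergeAdjacent (p : Fin k) (u : Fin (k + 1) → G) : Fin k → G :=
  fun c => if c = p then μ (u p.castSucc) (u p.succ) else u (p.castSucc.succAbove c)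

lemma cyclicFace_zero_cons (w : G) (u : Fin (k + 1) → G) :
    cyclicFace μ 0 (Fin.cons w u) = Fin.cons (μ w (u 0)) (u ∘ Fin.succ) := by
  have hmerge : mergeIndex (0 : Fin (k + 2)) 0 = 0 := by simp [mergeIndex]
  funext c
  cases c using Fin.cases with
  | zero => simp [cyclicFace, hmerge]
  | succ c => simp [cyclicFace, hmerge]

lemma cyclicFace_last_cons (w : G) (u : Fin (k + 1) → G) :
    cyclicFace μ (Fin.last (k + 1)) (Fin.cons w u) =
      Fin.cons (μ (u (Fin.last k)) w) (u ∘ Fin.castSucc) := by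
  have hmerge : mergeIndex (Fin.last (k + 1)) (Fin.last (k + 1)) = 0 := by simp [mergeIndex]
  have hlast : (Fin.cons w u : Fin (k + 2) → G) (Fin.last (k + 1)) = u (Fin.last k) := by
    rw [← Fin.succ_last, Fin.cons_succ]
  funext c
  cases c using Fin.cases with
  | zero => simp [cyclicFace, hmerge, hlast]
  | succ c => simp [cyclicFace, hmerge]

lemma cyclicFace_castSucc_succ_cons (p : Fin k) (w : G) (u : Fin (k + 1) → G) :
    cyclicFace μ p.castSucc.succ (Fin.cons w u) = Fin.cons w (mergeAdjacent μ p u) := by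
  have hmerge : mergeIndex p.castSucc.succ p.castSucc.succ = p.succ := by
    simp [mergeIndex_eq_succ_iff]
  have hnext : p.castSucc.succ + 1 = p.succ.succ := by
    simp [Fin.ext_iff, Fin.val_add_one, p.2.ne]
  funext c
  cases c using Fin.cases with
  | zero => simp [cyclicFace, hmerge, (Fin.succ_ne_zero p).symm]
  | succ c => simp [cyclicFace, hmerge, hnext, mergeAdjacent]

lemma mergeAdjacent_insertNth (p : Fin (k + 1)) (x y : G) (u : Fin k → G) :
    mergeAdjacent μ p (p.castSucc.insertNth x (p.insertNth y u)) = p.insertNth (μ x y) u := by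
  funext c
  rcases eq_or_ne c p with rfl | hc
  · have hsucc : c.succ = c.castSucc.succAbove c := by simp
    rw [mergeAdjacent, if_pos rfl, hsucc]
    simp only [Fin.insertNth_apply_same, Fin.insertNth_apply_succAbove]
  · obtain ⟨d, rfl⟩ := Fin.exists_succAbove_eq hc
    simp only [mergeAdjacent, if_neg hc, Fin.insertNth_apply_succAbove]

lemma val_succAbove (i : Fin (k + 1)) (a : Fin k) :
    (i.succAbove a).1 = if a.1 < i.1 then a.1 else a.1 + 1 := by
  simp only [Fin.succAbove, Fin.lt_def, Fin.val_castSucc]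
  split_ifs <;> rfl

lemma cons_comp_succAbove_succAbove (v : Fin (k + 2) → G) (z : G) (i : Fin (k + 2))
    (l : Fin (k + 1)) :
    (Fin.cons z ((v ∘ i.succAbove) ∘ l.succAbove) : Fin (k + 1) → G) =
      pairTuple (k + 1) v z (min i (i.succAbove l)) (max i (i.succAbove l)) := by
  funext c
  cases c using Fin.cases with
  | zero => simp [pairTuple]
  | succ c =>
    have hmin : (min i (i.succAbove l)).1 = min i.1 l.1 := by
      simp only [Fin.coe_min, val_succAbove]
      grind
    have hmax : (max i (i.succAbove l)).1 = max i.1 (l.1 + 1) := by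
      simp only [Fin.coe_max, val_succAbove]
      grind
    simp only [Fin.cons_succ, Function.comp_apply, pairTuple, hmin, hmax, Fin.val_succ,
      Nat.add_one_ne_zero, dite_false, Nat.add_sub_cancel]
    split_ifs <;> refine congrArg v (Fin.ext ?_) <;> simp only [val_succAbove] <;> grind

lemma sum_sum_succAbove (g : Fin (k + 2) → Fin (k + 2) → R) :
    ∑ i, ∑ l, (-1) ^ (i.1 + l.1) * g i (i.succAbove l) =
      ∑ i, ∑ l, if i < l then (-1) ^ (i.1 + l.1) * (g l i - g i l) else 0 := by
  have hrow (i : Fin (k + 2)) : ∑ l, (-1) ^ (i.1 + l.1) * g i (i.succAbove l) =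
      ∑ l, ((if l < i then (-1) ^ (i.1 + l.1) * g i l else 0) -
        if i < l then (-1) ^ (i.1 + l.1) * g i l else 0) := by
    rw [Fin.sum_univ_succAbove _ i]
    simp only [lt_irrefl, if_false, sub_zero, zero_add]
    refine Finset.sum_congr rfl fun l _ => ?_
    rcases lt_or_ge l.castSucc i with h | h
    · rw [Fin.succAbove_of_castSucc_lt i l h, if_pos h, if_neg h.asymm, sub_zero,
        Fin.val_castSucc]
    · have hlt : i < l.succ := Fin.lt_def.2 (Nat.lt_succ_of_le h)
      rw [Fin.succAbove_of_le_castSucc i l h, if_pos hlt, if_neg hlt.asymm, Fin.val_succ]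
      ring
  simp only [hrow, Finset.sum_sub_distrib]
  rw [Finset.sum_comm]
  simp only [← Finset.sum_sub_distrib]
  refine Finset.sum_congr rfl fun i _ => Finset.sum_congr rfl fun l _ => ?_
  split_ifs
  · rw [add_comm l.1, mul_sub]
  · rw [sub_zero]

/-- The faces `1, …, k` of a cyclic word antisymmetrize to the brackets of two arguments in the
Chevalley–Eilenberg differential. -/
lemma sum_antisymmetrization_mergeAdjacent (f : (Fin (k + 1) → G) → R) (v : Fin (k + 2) → G) :
    ∑ p : Fin (k + 1), (-1) ^ (p.1 + 1) *
        antisymmetrization (fun u => f (mergeAdjacent μ p u)) v =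
      ∑ i, ∑ l, if i < l then (-1) ^ (i.1 + l.1) *
        (antisymmetrization f (pairTuple (k + 1) v (μ (v i) (v l)) i l) -
          antisymmetrization f (pairTuple (k + 1) v (μ (v l) (v i)) i l)) else 0 := by
  let rest (i : Fin (k + 2)) (l : Fin (k + 1)) : Fin k → G := (v ∘ i.succAbove) ∘ l.succAbove
  let insert (p : Fin (k + 1)) (i : Fin (k + 2)) (l : Fin (k + 1)) : R := antisymmetrization
    (fun u => f (p.insertNth (μ (v i) (v (i.succAbove l))) u)) (rest i l)
  have hmerge (p : Fin (k + 1)) : antisymmetrization (fun u => f (mergeAdjacent μ p u)) v =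
      ∑ i : Fin (k + 2), ∑ l : Fin (k + 1), (-1) ^ (i.1 + l.1) * insert p i l := by
    rw [antisymmetrization_eq_sum_of_position _ _ p.castSucc]
    refine Finset.sum_congr rfl fun i _ => ?_
    rw [antisymmetrization_eq_sum_of_position _ _ p, Finset.mul_sum]
    refine Finset.sum_congr rfl fun l _ => ?_
    simp only [mergeAdjacent_insertNth, Function.comp_apply, Fin.val_castSucc, insert, rest]
    rw [← mul_assoc, ← pow_add, add_add_add_comm, pow_add, (Even.add_self p.1).neg_one_pow,
      mul_one]
  have hcons (i : Fin (k + 2)) (l : Fin (k + 1)) : ∑ p : Fin (k + 1), (-1) ^ p.1 * insert p i l =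
      antisymmetrization f (pairTuple (k + 1) v (μ (v i) (v (i.succAbove l)))
        (min i (i.succAbove l)) (max i (i.succAbove l))) := by
    rw [← cons_comp_succAbove_succAbove, antisymmetrization_cons]
  calc
    _ = -∑ i, ∑ l, (-1) ^ (i.1 + l.1) * ∑ p, (-1) ^ p.1 * insert p i l := by
      simp only [hmerge, Finset.mul_sum, ← Finset.sum_neg_distrib]
      rw [Finset.sum_comm]
      refine Finset.sum_congr rfl fun i _ => ?_
      rw [Finset.sum_comm]
      refine Finset.sum_congr rfl fun l _ => Finset.sum_congr rfl fun p _ => ?_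
      ring
    _ = _ := by
      simp only [hcons]
      rw [sum_sum_succAbove fun i l => antisymmetrization f
        (pairTuple (k + 1) v (μ (v i) (v l)) (min i l) (max i l))]
      simp only [← Finset.sum_neg_distrib]
      refine Finset.sum_congr rfl fun i _ => Finset.sum_congr rfl fun l _ => ?_
      split_ifs with h
      · rw [min_eq_left h.le, max_eq_right h.le, min_eq_right h.le, max_eq_left h.le]
        ring
      · exact neg_zero

/-- The cochain `v ↦ T(w, v)` antisymmetrized in `v`, with `w` playing the role of the module
argument. -/
def antisymmetrizeTail (T : (Fin (k + 1) → G) → R) (w : G) (v : Fin k → G) : R :=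
  antisymmetrization (fun u => T (Fin.cons w u)) v

theorem antisymmetrization_cyclicFace_zero (T : (Fin (k + 1) → G) → R) (v : Fin (k + 1) → G)
    (w : G) :
    antisymmetrization (fun u => T (cyclicFace μ 0 (Fin.cons w u))) v =
      ∑ i : Fin (k + 1), (-1) ^ i.1 * antisymmetrizeTail T (μ w (v i)) (v ∘ i.succAbove) := by
  simp only [cyclicFace_zero_cons]
  rw [antisymmetrization_eq_sum_of_position _ _ 0]
  simp [antisymmetrizeTail, Function.comp_def]

theorem antisymmetrization_cyclicFace_last (T : (Fin (k + 1) → G) → R) (v : Fin (k + 1) → G)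
    (w : G) :
    antisymmetrization (fun u => T (cyclicFace μ (Fin.last (k + 1)) (Fin.cons w u))) v =
      ∑ i : Fin (k + 1), (-1) ^ (i.1 + k) *
        antisymmetrizeTail T (μ (v i) w) (v ∘ i.succAbove) := by
  simp only [cyclicFace_last_cons]
  rw [antisymmetrization_eq_sum_of_position _ _ (Fin.last k)]
  simp [antisymmetrizeTail, Function.comp_def]

theorem antisymmetrizeTail_chevalleyEilenberg {T : (Fin (k + 1) → G) → R}
    (hT : ∀ x : Fin (k + 2) → G, ∑ j, (-1) ^ j.1 * T (cyclicFace μ j x) = 0)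
    (v : Fin (k + 1) → G) (w : G) :
    ∑ i : Fin (k + 1), (-1) ^ (i.1 + 1) *
        (antisymmetrizeTail T (μ (v i) w) (v ∘ i.succAbove) -
          antisymmetrizeTail T (μ w (v i)) (v ∘ i.succAbove)) +
      ∑ i, ∑ l, (if i < l then (-1) ^ (i.1 + l.1) *
        (antisymmetrizeTail T w (pairTuple k v (μ (v i) (v l)) i l) -
          antisymmetrizeTail T w (pairTuple k v (μ (v l) (v i)) i l)) else 0) = 0 := by
  have hmiddle : ∑ p : Fin k, (-1) ^ (p.1 + 1) *
      antisymmetrization (fun u => T (cyclicFace μ p.castSucc.succ (Fin.cons w u))) v =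
        ∑ i, ∑ l, if i < l then (-1) ^ (i.1 + l.1) *
          (antisymmetrizeTail T w (pairTuple k v (μ (v i) (v l)) i l) -
            antisymmetrizeTail T w (pairTuple k v (μ (v l) (v i)) i l)) else 0 := by
    simp only [cyclicFace_castSucc_succ_cons]
    cases k with
    | zero => simp
    | succ k => exact sum_antisymmetrization_mergeAdjacent μ (fun u => T (Fin.cons w u)) v
  have hsum : ∑ j : Fin (k + 2), (-1) ^ j.1 *
      antisymmetrization (fun u => T (cyclicFace μ j (Fin.cons w u))) v = 0 := by
    rw [← antisymmetrization_sum_mul]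
    simp [antisymmetrization, hT]
  rw [Fin.sum_univ_succ, Fin.sum_univ_castSucc, Fin.succ_last, antisymmetrization_cyclicFace_zero,
    antisymmetrization_cyclicFace_last] at hsum
  simp only [Fin.val_succ, Fin.val_castSucc, hmiddle] at hsum
  have hsign (i : ℕ) : (-1 : R) ^ (k + 1) * (-1) ^ (i + k) = (-1) ^ (i + 1) := by
    rw [← pow_add, show k + 1 + (i + k) = i + 1 + (k + k) by ring, pow_add,
      (Even.add_self k).neg_one_pow, mul_one]
  refine Eq.trans ?_ hsum
  rw [Fin.val_zero, pow_zero, one_mul, Fin.val_last, Finset.mul_sum]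
  simp only [← mul_assoc, hsign, mul_sub, Finset.sum_sub_distrib]
  simp only [pow_succ, mul_neg_one, neg_mul, Finset.sum_neg_distrib]
  ring

end ChevalleyEilenberg

/-! ### `Θ` is closed -/

section TailAlternatization

variable {R M : Type*} [CommRing R] [AddCommGroup M] [Module R M] {k : ℕ}

/-- The alternatization of a multilinear form in all arguments but the first, as a cochain with
values in the dual of `M`. -/
def tailAlternatization (T : MultilinearMap R (fun _ : Fin (k + 1) => M) R) :
    M →ₗ[R] M [⋀^Fin k]→ₗ[R] R where
  toFun w := MultilinearMap.alternatization (T.curryLeft w)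
  map_add' w w' := by rw [map_add, map_add]
  map_smul' c w := by
    ext v
    simp [MultilinearMap.alternatization_apply, Finset.mul_sum, mul_smul_comm]

lemma tailAlternatization_apply (T : MultilinearMap R (fun _ : Fin (k + 1) => M) R) (w : M)
    (v : Fin k → M) : tailAlternatization T w v = antisymmetrizeTail T w v := by
  change MultilinearMap.alternatization (T.curryLeft w) v = _
  simp only [MultilinearMap.alternatization_apply, antisymmetrizeTail, antisymmetrization]
  rfl

end TailAlternatization

lemma Theta_eq_tailAlternatization (n N : ℕ) (v : Fin (2 * n) → glA n N) (w : glA n N) :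
    Theta n N v w = tailAlternatization (tauMatrix n N) w v := by
  rw [tailAlternatization_apply, Theta, phiN, antisymmetrizeTail, antisymmetrization]
  refine Finset.sum_congr rfl fun σ _ => congrArg _ ?_
  rw [tauMatrix_apply]
  refine Finset.sum_congr rfl fun r _ => ?_
  rw [tauMultilinear_apply]
  congr 2
  funext c
  cases c using Fin.cases <;> simp

lemma eps_mul_T_neg_one : eps * LaurentPolynomial.T (-1) = 1 := by
  rw [eps, ← LaurentPolynomial.T_add, add_neg_cancel, LaurentPolynomial.T_zero]

lemma pairTuple_succ_eq_update {G : Type*} {k : ℕ} (v : Fin (k + 2) → G) (b z : G)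
    (i l : Fin (k + 2)) :
    pairTuple (k + 1) v b i l = Function.update (pairTuple (k + 1) v z i l) 0 b := by
  funext c
  cases c using Fin.cases with
  | zero => simp [pairTuple]
  | succ c => simp [pairTuple]

section Coboundary

variable {n N k : ℕ} (Φ : glA n N →ₗ[Kc] glA n N [⋀^Fin k]→ₗ[Kc] Kc)

lemma eps_mul_apply_glBr (Z W : glA n N) (v : Fin k → glA n N) :
    eps * Φ (glBr n N Z W) v = Φ (matMul n N Z W) v - Φ (matMul n N W Z) v := by
  rw [glBr, map_smul, map_sub, AlternatingMap.smul_apply, AlternatingMap.sub_apply, smul_eq_mul,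
    ← mul_assoc, eps_mul_T_neg_one, one_mul]

lemma eps_mul_apply_pairTuple_glBr (w Z W : glA n N) (v : Fin (k + 1) → glA n N)
    {i l : Fin (k + 1)} (hil : i < l) :
    eps * Φ w (pairTuple k v (glBr n N Z W) i l) =
      Φ w (pairTuple k v (matMul n N Z W) i l) - Φ w (pairTuple k v (matMul n N W Z) i l) := by
  cases k with
  | zero => omega
  | succ k =>
    rw [pairTuple_succ_eq_update v _ 0, pairTuple_succ_eq_update v (matMul n N Z W) 0,
      pairTuple_succ_eq_update v (matMul n N W Z) 0, glBr,
      (Φ w).map_update_smul, (Φ w).map_update_sub, smul_eq_mul,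
      ← mul_assoc, eps_mul_T_neg_one, one_mul]

lemma eps_mul_dCoadj (v : Fin (k + 1) → glA n N) (w : glA n N) :
    eps * dCoadj n N k (fun v w => Φ w v) v w =
      ∑ i : Fin (k + 1), (-1) ^ (i.1 + 1) *
          (Φ (matMul n N (v i) w) (v ∘ i.succAbove) - Φ (matMul n N w (v i)) (v ∘ i.succAbove)) +
        ∑ i, ∑ l, (if i < l then (-1) ^ (i.1 + l.1) *
          (Φ w (pairTuple k v (matMul n N (v i) (v l)) i l) -
            Φ w (pairTuple k v (matMul n N (v l) (v i)) i l)) else 0) := by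
  simp only [dCoadj, mul_add, Finset.mul_sum, smul_eq_mul, mul_left_comm eps,
    eps_mul_apply_glBr, mul_ite, mul_zero]
  congr! 5 with i _ l _ hil
  rw [eps_mul_apply_pairTuple_glBr Φ _ _ _ _ hil]

end Coboundary

theorem dCoadj_Theta (n N : ℕ) (v : Fin (2 * n + 1) → glA n N) (w : glA n N) :
    dCoadj n N (2 * n) (Theta n N) v w = 0 := by
  have hcocycle := antisymmetrizeTail_chevalleyEilenberg (matMul n N)
    (sum_neg_one_pow_mul_tauMatrix_cyclicFace n N) v w
  simp only [← tailAlternatization_apply] at hcocycle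
  rw [← eps_mul_dCoadj] at hcocycle
  simp only [← Theta_eq_tailAlternatization] at hcocycle
  exact (IsUnit.of_mul_eq_one _ eps_mul_T_neg_one).mul_right_eq_zero.1 hcocycle

/-! ### Vanishing on `gl_N ⊕ sp_{2n}` -/

section KernelIntegral

variable {L : Type*} [CommRing L] {k : ℕ}

lemma faceRestrict_val_succ_rename_succAbove (p : Fin (k + 1)) (G : MvPolynomial (Fin k) L) :
    faceRestrict L (p.1 + 1) (rename p.succAbove G) = G := by
  rw [faceRestrict, simplexFace_val_succ, aeval_rename]
  convert aeval_X_left_apply G using 2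
  congr 1
  funext c
  simp

lemma faceRestrict_val_rename_succAbove (p : Fin (k + 1)) (G : MvPolynomial (Fin k) L) :
    faceRestrict L p.1 (rename p.succAbove G) = G := by
  rw [faceRestrict, simplexFace_val, aeval_rename]
  convert aeval_X_left_apply G using 2
  congr 1
  funext c
  simp

lemma rename_succAbove_padded_X (p c : Fin (k + 1)) :
    rename p.succAbove (padded X c.1 : MvPolynomial (Fin k) L) =
      padded X (p.succ.succAbove c).1 := by
  cases c using Fin.cases with
  | zero => simp
  | succ c =>
    rw [Fin.succ_succAbove_succ, Fin.val_succ, Fin.val_succ, padded_val_succ, padded_val_succ,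
      rename_X]

lemma orderSign_succAbove (q : Fin (k + 2)) (c d : Fin (k + 1)) :
    orderSign (q.succAbove c) (q.succAbove d) = orderSign c d := by
  simp [orderSign]

lemma rename_succAbove_kernelCoeff (p c d : Fin (k + 1)) :
    rename p.succAbove (kernelCoeff L k c d) =
      kernelCoeff L (k + 1) (p.succ.succAbove c) (p.succ.succAbove d) := by
  simp only [kernelCoeff, map_add, map_sub, map_mul, map_ofNat, map_intCast,
    rename_succAbove_padded_X, orderSign_succAbove]

lemma orderSign_succ_succAbove (p c : Fin (k + 1)) :
    orderSign p.succ (p.succ.succAbove c) = if p < c then 1 else -1 := by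
  rcases lt_or_ge p c with h | h
  · rw [Fin.succAbove_of_le_castSucc _ _ (by simpa [Fin.le_def] using h)]
    simp [orderSign, h]
  · have : c.castSucc < p.succ := Fin.castSucc_lt_succ_iff.2 h
    rw [Fin.succAbove_of_castSucc_lt _ _ this]
    simp [orderSign, h.not_gt, Fin.lt_def] at *
    omega

lemma kernelCoeff_succ_succAbove (p c : Fin (k + 1)) :
    kernelCoeff L (k + 1) p.succ (p.succ.succAbove c) =
      2 * X p - 2 * rename p.succAbove (padded X c.1) + C (if p < c then 1 else -1) := by
  rw [kernelCoeff, rename_succAbove_padded_X, orderSign_succ_succAbove, Fin.val_succ,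
    padded_val_succ]
  split_ifs <;> simp

/-- The value at `s = u_j` of the primitive in `s` of `2s − 2u_c + sign (u_c - s)`. -/
def kernelPrimitive (L : Type*) [CommRing L] {k : ℕ} (c : Fin (k + 1)) (j : ℕ) :
    MvPolynomial (Fin k) L :=
  padded X j ^ 2 - 2 * padded X c.1 * padded X j +
    if j ≤ c.1 then padded X j else 2 * padded X c.1 - padded X j

variable [Algebra ℝ L]

lemma simplexIntegral_kernelCoeff_mul_rename (p c : Fin (k + 1)) (G : MvPolynomial (Fin k) L) :
    simplexIntegral L (k + 1)
        (kernelCoeff L (k + 1) p.succ (p.succ.succAbove c) * rename p.succAbove G) =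
      simplexIntegral L k ((kernelPrimitive L c (p.1 + 1) - kernelPrimitive L c p.1) * G) := by
  have hconst (H : MvPolynomial (Fin k) L) : pderiv p (rename p.succAbove H) = 0 :=
    pderiv_rename_of_notMem_range _ (by simp) H
  have hprimitive : kernelCoeff L (k + 1) p.succ (p.succ.succAbove c) * rename p.succAbove G =
      pderiv p ((X p ^ 2 - 2 * rename p.succAbove (padded X c.1) * X p +
        C (if p < c then 1 else -1) * X p) * rename p.succAbove G) := by
    rw [kernelCoeff_succ_succAbove, ← map_ofNat C 2]
    simp only [Derivation.leibniz, Derivation.leibniz_pow, map_add, map_sub, hconst,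
      pderiv_X_self, pderiv_C, smul_eq_mul, nsmul_eq_mul]
    rw [map_ofNat C 2]
    push_cast
    ring
  have hupper : faceRestrict L (p.1 + 1) (X p) = padded X (p.1 + 1) := by
    rw [← padded_val_succ X p, faceRestrict_padded_X _ (by omega), if_pos le_rfl]
  have hlower : faceRestrict L p.1 (X p) = padded X p.1 := by
    rw [← padded_val_succ X p, faceRestrict_padded_X _ (by omega), if_neg (by omega)]
    rfl
  rw [hprimitive, simplexIntegral_pderiv, ← map_sub]
  congr 1
  simp only [map_mul, map_add, map_sub, map_pow, map_ofNat, faceRestrict_C, hupper, hlower,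
    faceRestrict_val_succ_rename_succAbove, faceRestrict_val_rename_succAbove, kernelPrimitive]
  rcases lt_trichotomy p c with h | rfl | h
  · have h' : p.1 < c.1 := h
    simp only [if_pos h, if_pos h'.le, if_pos (show p.1 + 1 ≤ c.1 from h'), map_one]
    ring
  · simp only [lt_irrefl, le_refl, if_true, if_false, (p.1.lt_succ_self).not_ge, map_neg, map_one]
    ring
  · have h' : c.1 < p.1 := h
    simp only [if_neg h.not_gt, if_neg h'.not_ge, if_neg (show ¬p.1 + 1 ≤ c.1 by omega), map_neg,
      map_one]
    ring

/-- For fixed `u_c`, the integral of `2s − 2u_c + sign (u_c - s)` over `0 ≤ s ≤ 1` is zero. -/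
theorem sum_simplexIntegral_kernelCoeff_mul_rename (c : Fin (k + 1)) (G : MvPolynomial (Fin k) L) :
    ∑ p : Fin (k + 1), simplexIntegral L (k + 1)
      (kernelCoeff L (k + 1) p.succ (p.succ.succAbove c) * rename p.succAbove G) = 0 := by
  have htelescope : ∑ p : Fin (k + 1), (kernelPrimitive L c (p.1 + 1) - kernelPrimitive L c p.1) =
      0 := by
    rw [Fin.sum_univ_eq_sum_range (fun j => kernelPrimitive L c (j + 1) - kernelPrimitive L c j),
      Finset.sum_range_sub, kernelPrimitive, kernelPrimitive, if_neg c.2.not_ge,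
      padded_of_lt _ k.lt_succ_self]
    simp
  simp only [simplexIntegral_kernelCoeff_mul_rename]
  rw [← map_sum, ← Finset.sum_mul, htelescope, zero_mul, map_zero]

end KernelIntegral

lemma map_kernelCoeff {L L' : Type*} [CommRing L] [CommRing L'] (f : L →+* L') (k a b : ℕ) :
    MvPolynomial.map f (kernelCoeff L k a b) = kernelCoeff L' k a b := by
  have hpadded (a : ℕ) : MvPolynomial.map f (padded X a : MvPolynomial (Fin k) L) = padded X a := by
    rw [map_padded]
    congr 1
    funext c
    exact map_X f c
  simp only [kernelCoeff, map_add, map_sub, map_mul, map_ofNat, map_intCast, hpadded]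

lemma add_pow_of_sq_eq_zero {A : Type*} [CommRing A] (a : A) {b : A} (hb : b ^ 2 = 0) (m : ℕ) :
    (a + b) ^ m = a ^ m + m * a ^ (m - 1) * b := by
  simpa [Polynomial.derivative_X_pow] using
    Polynomial.eval_add_of_sq_eq_zero (Polynomial.X ^ m) a b hb

section DualNumbers

variable {L : Type*} [CommRing L] [Algebra ℝ L] {n k : ℕ}

lemma exponentPoly_insertNth (p : Fin (k + 1)) (e : Fin (2 * n) → L)
    (y : Fin (k + 1) → Fin (2 * n) → L) :
    exponentPoly (p.succ.insertNth e y : Fin (k + 2) → Fin (2 * n) → L) =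
      rename p.succAbove (exponentPoly y) + ∑ c : Fin (k + 1),
        kernelCoeff L (k + 1) p.succ (p.succ.succAbove c) * C (symplecticForm e (y c)) := by
  have hswap (c : Fin (k + 1)) :
      kernelCoeff L (k + 1) (p.succ.succAbove c) p.succ * C (symplecticForm (y c) e) =
        kernelCoeff L (k + 1) p.succ (p.succ.succAbove c) * C (symplecticForm e (y c)) := by
    rw [kernelCoeff_swap, ← symplecticForm_isAlt.neg_eq, map_neg, neg_mul_neg]
  have hrename : rename p.succAbove (exponentPoly y) = (1 / 2 : ℝ) • ∑ c, ∑ d,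
      kernelCoeff L (k + 1) (p.succ.succAbove c) (p.succ.succAbove d) *
        C (symplecticForm (y c) (y d)) := by
    simp only [exponentPoly, AlgHom.map_smul_of_tower, map_sum, map_mul, rename_C,
      rename_succAbove_kernelCoeff]
  have hhalf (P : MvPolynomial (Fin (k + 1)) L) : (1 / 2 : ℝ) • (P + P) = P := by
    rw [← two_smul ℝ P, smul_smul]
    norm_num
  rw [hrename, exponentPoly, Fin.sum_univ_succAbove _ p.succ]
  simp only [Fin.sum_univ_succAbove _ p.succ, Fin.insertNth_apply_same,
    Fin.insertNth_apply_succAbove, symplecticForm_isAlt e, map_zero, mul_zero, zero_add,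
    Finset.sum_add_distrib, hswap]
  rw [← add_assoc, smul_add, hhalf]
  exact add_comm _ _

lemma simplexIntegral_exponentPoly_insertNth_pow {L' : Type*} [CommRing L'] [Algebra ℝ L']
    (f : L →ₐ[ℝ] L') {t : L'} (ht : t ^ 2 = 0) (m : ℕ) (p : Fin (k + 1)) (e : Fin (2 * n) → L)
    (y : Fin (k + 1) → Fin (2 * n) → L) :
    simplexIntegral L' (k + 1) (exponentPoly (p.succ.insertNth (t • fun v => f (e v))
        fun c v => f (y c v) : Fin (k + 2) → Fin (2 * n) → L') ^ m) =
      f (simplexIntegral L (k + 1) (rename p.succAbove (exponentPoly y ^ m))) +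
        t * f (∑ c : Fin (k + 1), simplexIntegral L (k + 1)
          (kernelCoeff L (k + 1) p.succ (p.succ.succAbove c) * rename p.succAbove
            ((m : MvPolynomial (Fin k) L) * exponentPoly y ^ (m - 1) *
              C (symplecticForm e (y c))))) := by
  set B : MvPolynomial (Fin (k + 1)) L := ∑ c : Fin (k + 1),
    kernelCoeff L (k + 1) p.succ (p.succ.succAbove c) * C (symplecticForm e (y c)) with hB
  set V : MvPolynomial (Fin k) L := m * exponentPoly y ^ (m - 1) with hV
  have hexponent : exponentPoly (p.succ.insertNth (t • fun v => f (e v)) fun c v => f (y c v) :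
      Fin (k + 2) → Fin (2 * n) → L') =
        map (f : L →+* L') (rename p.succAbove (exponentPoly y)) + C t * map (f : L →+* L') B := by
    rw [exponentPoly_insertNth, hB, map_rename, map_exponentPoly, map_sum, Finset.mul_sum]
    congr 1
    refine Finset.sum_congr rfl fun c _ => ?_
    rw [map_smul, LinearMap.smul_apply, ← map_symplecticForm, smul_eq_mul, map_mul, map_mul,
      map_kernelCoeff, map_C, RingHom.coe_coe]
    ring
  have hsq : (C t * map (f : L →+* L') B) ^ 2 = 0 := by
    rw [mul_pow, ← map_pow, ht, map_zero, zero_mul]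
  have hpow : (map (f : L →+* L') (rename p.succAbove (exponentPoly y)) +
      C t * map (f : L →+* L') B) ^ m =
        map (f : L →+* L') (rename p.succAbove (exponentPoly y ^ m)) + C t *
          map (f : L →+* L') (rename p.succAbove V * B) := by
    rw [add_pow_of_sq_eq_zero _ hsq]
    simp only [hV, map_mul, map_pow, map_natCast]
    ring
  have hsum : rename p.succAbove V * B = ∑ c : Fin (k + 1),
      kernelCoeff L (k + 1) p.succ (p.succ.succAbove c) * rename p.succAbove
        (V * C (symplecticForm e (y c))) := by
    rw [hB, Finset.mul_sum]
    refine Finset.sum_congr rfl fun c _ => ?_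
    rw [map_mul (rename _) _ (C _), rename_C]
    ring
  rw [hexponent, hpow, map_add, simplexIntegral_C_mul, simplexIntegral_map, simplexIntegral_map,
    hsum, map_sum (simplexIntegral L (k + 1))]

theorem sum_snd_expIntegral_insertNth_inr (m : ℕ) (e : Fin (2 * n) → L)
    (y : Fin (k + 1) → Fin (2 * n) → L) :
    ∑ p : Fin (k + 1), (expIntegral m (p.succ.insertNth (fun v => TrivSqZeroExt.inr (e v))
      fun c v => TrivSqZeroExt.inl (y c v) : Fin (k + 2) → Fin (2 * n) → DualNumber L)).snd =
        0 := by
  have hinr : (fun v => TrivSqZeroExt.inr (e v) : Fin (2 * n) → DualNumber L) =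
      (DualNumber.eps : DualNumber L) • fun v => TrivSqZeroExt.inlAlgHom ℝ L L (e v) := by
    funext v
    simp [DualNumber.inr_eq_smul_eps, TrivSqZeroExt.ext_iff]
  have hsnd (p : Fin (k + 1)) : (expIntegral m (p.succ.insertNth
      (fun v => TrivSqZeroExt.inr (e v)) fun c v => TrivSqZeroExt.inl (y c v) :
        Fin (k + 2) → Fin (2 * n) → DualNumber L)).snd =
      (m.factorial⁻¹ : ℝ) • ∑ c : Fin (k + 1), simplexIntegral L (k + 1)
        (kernelCoeff L (k + 1) p.succ (p.succ.succAbove c) * rename p.succAbove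
          ((m : MvPolynomial (Fin k) L) * exponentPoly y ^ (m - 1) *
            C (symplecticForm e (y c)))) := by
    rw [expIntegral, hinr]
    refine (congrArg (fun z => ((m.factorial⁻¹ : ℝ) • z).snd)
      (simplexIntegral_exponentPoly_insertNth_pow (TrivSqZeroExt.inlAlgHom ℝ L L)
        DualNumber.eps_pow_two m p e y)).trans ?_
    simp [-map_sum]
  simp only [hsnd]
  rw [← Finset.smul_sum, Finset.sum_comm]
  simp only [sum_simplexIntegral_kernelCoeff_mul_rename, Finset.sum_const_zero, smul_zero]

end DualNumbers

section RowExpansion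

variable {L : Type*} [CommRing L] {m : ℕ}

/-- The cofactors of the first row of a square matrix. -/
def firstRowCofactor (y : Fin (m + 1) → Fin (m + 1) → L) (v : Fin (m + 1)) : L :=
  (-1) ^ v.1 * Matrix.det (Matrix.of fun c d : Fin m => y c.succ (v.succAbove d))

lemma map_firstRowCofactor {L' F : Type*} [CommRing L'] [FunLike F L L'] [RingHomClass F L L']
    (f : F) (y : Fin (m + 1) → Fin (m + 1) → L) (v : Fin (m + 1)) :
    f (firstRowCofactor y v) = firstRowCofactor (fun a w => f (y a w)) v := by
  rw [firstRowCofactor, map_mul, map_pow, map_neg, map_one, firstRowCofactor]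
  exact congrArg _ (RingHom.map_det (f : L →+* L') _)

lemma tailDet_eq_sum_firstRowCofactor (x : Fin (m + 2) → Fin (m + 1) → L) (p : Fin (m + 1)) :
    tailDet x = (-1) ^ p.1 * ∑ v, x p.succ v * firstRowCofactor (p.succ.removeNth x) v := by
  rw [tailDet, Matrix.det_succ_row _ p, Finset.mul_sum]
  refine Finset.sum_congr rfl fun v _ => ?_
  have hminor : (Matrix.of fun a => x a.succ).submatrix p.succAbove v.succAbove =
      Matrix.of fun c d : Fin m => p.succ.removeNth x c.succ (v.succAbove d) := by
    ext c d
    simp [Fin.removeNth]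
  rw [firstRowCofactor, ← hminor, pow_add]
  simp only [Matrix.of_apply]
  ring

lemma exists_tailDet_X_eq {R : Type*} [CommRing R] (m : ℕ) :
    ∃ M : Fin m → MvPolynomial (Fin m × Fin m) R, ∀ p : Fin m,
      tailDet (fun a v => (X (a, v) : MvPolynomial (Fin (m + 1) × Fin m) R)) =
        (-1) ^ p.1 * ∑ v, X (p.succ, v) * rename (Prod.map p.succ.succAbove id) (M v) := by
  cases m with
  | zero => exact ⟨fun v => v.elim0, fun p => p.elim0⟩
  | succ m =>
    refine ⟨firstRowCofactor fun a v => X (a, v), fun p => ?_⟩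
    simp only [tailDet_eq_sum_firstRowCofactor _ p, map_firstRowCofactor, rename_X]
    rfl

end RowExpansion

/-- The first-order expansion `a ↦ f a + ε f (D a)` along a derivation, in dual numbers. -/
def firstJet {R A B : Type*} [CommRing R] [CommRing A] [CommRing B] [Algebra R A] [Algebra R B]
    (f : A →ₐ[R] B) (D : Derivation R A A) : A →ₐ[R] DualNumber B where
  toFun a := TrivSqZeroExt.inl (f a) + TrivSqZeroExt.inr (f (D a))
  map_one' := by simp
  map_mul' a b := by
    ext <;> simp [mul_comm]
  map_zero' := by simp
  map_add' a b := by
    ext <;> simp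
  commutes' r := by
    ext <;> simp [TrivSqZeroExt.algebraMap_eq_inl']

lemma firstJet_apply {R A B : Type*} [CommRing R] [CommRing A] [CommRing B] [Algebra R A]
    [Algebra R B] (f : A →ₐ[R] B) (D : Derivation R A A) (a : A) :
    firstJet f D a = TrivSqZeroExt.inl (f a) + TrivSqZeroExt.inr (f (D a)) :=
  rfl

section Slot

variable {n k : ℕ}

/-- The inclusion of the variables of the slots other than the `q`-th one. -/
def slotEmbedding (n : ℕ) {k : ℕ} (q : Fin (k + 1)) :
    Fin k × Fin (2 * n) → Fin (k + 1) × Fin (2 * n) :=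
  Prod.map q.succAbove id

lemma slotEmbedding_injective (q : Fin (k + 1)) : (slotEmbedding n q).Injective :=
  Fin.succAbove_right_injective.prodMap Function.injective_id

lemma notMem_range_slotEmbedding (q : Fin (k + 1)) (v : Fin (2 * n)) :
    (q, v) ∉ Set.range (slotEmbedding n q) := by
  rintro ⟨⟨c, w⟩, h⟩
  exact Fin.succAbove_ne q c (congrArg Prod.fst h)

lemma elemT_insertNth (q : Fin (k + 1)) (Q : Apol n) (u : Fin k → Apol n) :
    elemT (q.insertNth Q u : Fin (k + 1) → Apol n) =
      embA n (k + 1) q Q * rename (slotEmbedding n q) (elemT u) := by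
  rw [elemT, Fin.prod_univ_succAbove _ q, Fin.insertNth_apply_same, elemT, map_prod]
  congr 1
  refine Finset.prod_congr rfl fun c _ => ?_
  rw [Fin.insertNth_apply_succAbove, embA, embA, rename_rename]
  rfl

lemma symbolPullback_slotEmbedding_genericCovector (q : Fin (k + 1)) :
    (fun a v => symbolPullback (slotEmbedding n q) (genericCovector n (k + 1) a v)) =
      q.insertNth 0 (genericCovector n k) := by
  funext a v
  cases a using Fin.succAboveCases q with
  | x =>
    rw [Fin.insertNth_apply_same]
    exact symbolPullback_X_of_notMem_range (notMem_range_slotEmbedding q v)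
  | p c =>
    rw [Fin.insertNth_apply_succAbove]
    exact symbolPullback_X_apply (slotEmbedding_injective q) (c, v)

lemma firstJet_genericCovector (q : Fin (k + 1)) (b : Fin (2 * n)) :
    (fun a v => firstJet (symbolPullback (slotEmbedding n q)) (pderiv (q, b))
      (genericCovector n (k + 1) a v)) =
      (q.insertNth (fun v => TrivSqZeroExt.inr (Pi.single (M := fun _ => Tens n k) b 1 v))
        fun c v => TrivSqZeroExt.inl (genericCovector n k c v) :
          Fin (k + 1) → Fin (2 * n) → DualNumber (Tens n k)) := by
  have hpull := symbolPullback_slotEmbedding_genericCovector (n := n) q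
  funext a v
  have hav := congrFun (congrFun hpull a) v
  rw [firstJet_apply, hav]
  cases a using Fin.succAboveCases q with
  | x =>
    rcases eq_or_ne v b with rfl | hvb
    · simp [genericCovector]
    · simp [genericCovector, hvb]
  | p c =>
    simp [genericCovector, Fin.succAbove_ne]

theorem sum_symbolPullback_pderiv_expIntegral (m : ℕ) (b : Fin (2 * n)) :
    ∑ p : Fin k, symbolPullback (slotEmbedding n p.succ)
      (pderiv (p.succ, b) (expIntegral m (genericCovector n (k + 1)))) = 0 := by
  cases k with
  | zero => rfl
  | succ k =>
    have hsnd (p : Fin (k + 1)) : symbolPullback (slotEmbedding n p.succ)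
        (pderiv (p.succ, b) (expIntegral m (genericCovector n (k + 2)))) =
          (expIntegral m (p.succ.insertNth
            (fun v => TrivSqZeroExt.inr (Pi.single (M := fun _ => Tens n (k + 1)) b 1 v))
            fun c v => TrivSqZeroExt.inl (genericCovector n (k + 1) c v) :
              Fin (k + 2) → Fin (2 * n) → DualNumber (Tens n (k + 1)))).snd := by
      rw [← firstJet_genericCovector]
      have hmap := map_expIntegral ((firstJet (symbolPullback (slotEmbedding n p.succ))
        (pderiv (p.succ, b))).restrictScalars ℝ) m (genericCovector n (k + 2))
      simp only [AlgHom.restrictScalars_apply] at hmap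
      rw [← hmap, firstJet_apply, TrivSqZeroExt.snd_add, TrivSqZeroExt.snd_inl,
        TrivSqZeroExt.snd_inr, zero_add]
    simp only [hsnd]
    exact sum_snd_expIntegral_insertNth_inr m (Pi.single b 1) (genericCovector n (k + 1))

lemma symbolPullback_tailDet_genericCovector (p : Fin (2 * n)) :
    symbolPullback (slotEmbedding n p.succ) (tailDet (genericCovector n (2 * n + 1))) = 0 := by
  rw [tailDet, AlgHom.map_det]
  refine Matrix.det_eq_zero_of_row_eq_zero p fun v => ?_
  exact symbolPullback_X_of_notMem_range (notMem_range_slotEmbedding p.succ v)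

lemma exists_pderiv_tailDet_genericCovector_eq (n : ℕ) : ∃ M : Fin (2 * n) → Tens n (2 * n),
    ∀ p v : Fin (2 * n), pderiv (p.succ, v) (tailDet (genericCovector n (2 * n + 1))) =
      (-1) ^ p.1 * rename (slotEmbedding n p.succ) (M v) := by
  obtain ⟨M, hM⟩ := exists_tailDet_X_eq (R := Kc) (2 * n)
  refine ⟨M, fun p v => ?_⟩
  have hsign : ((-1) ^ p.1 : Tens n (2 * n + 1)) = C ((-1) ^ p.1) := by
    rw [C_pow, C_neg, C_1]
  have hrename (w : Fin (2 * n)) :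
      pderiv (p.succ, v) (rename (slotEmbedding n p.succ) (M w)) = 0 :=
    pderiv_rename_of_notMem_range _ (notMem_range_slotEmbedding p.succ v) _
  refine (congrArg _ (hM p)).trans ?_
  rw [hsign, pderiv_C_mul, map_sum, Finset.sum_eq_single v]
  · rw [pderiv_mul, pderiv_X_self, one_mul]
    simp only [slotEmbedding] at hrename
    rw [hrename, mul_zero, add_zero, slotEmbedding]
  · intro w _ hw
    rw [pderiv_mul, pderiv_X_of_ne (by simpa using hw), zero_mul, zero_add]
    exact (congrArg _ (hrename w)).trans (mul_zero _)
  · exact fun hv => absurd (Finset.mem_univ v) hv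

theorem sum_symbolPullback_pderiv_pderiv_tauSymbol (m : ℕ) (a b : Fin (2 * n)) :
    ∑ p : Fin (2 * n), (-1) ^ p.1 * symbolPullback (slotEmbedding n p.succ)
      (pderiv (p.succ, b) (pderiv (p.succ, a) (tauSymbol n m))) = 0 := by
  obtain ⟨M, hM⟩ := exists_pderiv_tailDet_genericCovector_eq n
  set D := tailDet (genericCovector n (2 * n + 1)) with hD
  set J := expIntegral m (genericCovector n (2 * n + 1)) with hJ
  have hterm (p : Fin (2 * n)) : (-1) ^ p.1 * symbolPullback (slotEmbedding n p.succ)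
      (pderiv (p.succ, b) (pderiv (p.succ, a) (tauSymbol n m))) =
        M a * symbolPullback (slotEmbedding n p.succ) (pderiv (p.succ, b) J) +
          M b * symbolPullback (slotEmbedding n p.succ) (pderiv (p.succ, a) J) := by
    have hpullM (v : Fin (2 * n)) : (-1) ^ p.1 * symbolPullback (slotEmbedding n p.succ)
        (pderiv (p.succ, v) D) = M v := by
      rw [hM, map_mul, map_pow, map_neg, map_one, symbolPullback_rename
        (slotEmbedding_injective _), ← mul_assoc, ← mul_pow, neg_mul_neg, one_mul, one_pow, one_mul]
    have hsecond : pderiv (p.succ, b) (pderiv (p.succ, a) D) = 0 := by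
      have hsign : ((-1) ^ p.1 : Tens n (2 * n + 1)) = C ((-1) ^ p.1) := by
        rw [C_pow, C_neg, C_1]
      rw [hM, hsign, pderiv_C_mul,
        pderiv_rename_of_notMem_range _ (notMem_range_slotEmbedding p.succ b), mul_zero]
    rw [tauSymbol, ← hD, ← hJ, pderiv_mul, map_add, pderiv_mul, pderiv_mul, hsecond, ← hpullM a,
      ← hpullM b]
    simp only [map_add, map_mul, map_zero, hD, symbolPullback_tailDet_genericCovector]
    ring
  simp only [hterm, Finset.sum_add_distrib, ← Finset.mul_sum, hJ,
    sum_symbolPullback_pderiv_expIntegral, mul_zero, add_zero]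

theorem sum_tauMultilinear_insertNth_X_mul_X (a b : Fin (2 * n)) (u : Fin (2 * n) → Apol n) :
    ∑ p : Fin (2 * n), (-1) ^ p.1 * tauMultilinear n
      (p.succ.insertNth (X a * X b) u : Fin (2 * n + 1) → Apol n) = 0 := by
  have hdeg (p : Fin (2 * n)) : (elemT (p.succ.insertNth (X a * X b) u :
      Fin (2 * n + 1) → Apol n)).totalDegree < 2 + (elemT u).totalDegree + 1 := by
    rw [elemT_insertNth, map_mul, embA, rename_X, rename_X]
    refine Nat.lt_succ_of_le ((totalDegree_mul _ _).trans
      (add_le_add ?_ (totalDegree_rename_le _ _)))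
    exact (totalDegree_mul _ _).trans_eq (by simp)
  have hterm (p : Fin (2 * n)) : (-1) ^ p.1 * tauMultilinear n
      (p.succ.insertNth (X a * X b) u : Fin (2 * n + 1) → Apol n) =
        ∑ m ∈ Finset.range (2 + (elemT u).totalDegree + 1), eps ^ m * constantCoeff
          (diffOp ((-1) ^ p.1 * symbolPullback (slotEmbedding n p.succ)
            (pderiv (p.succ, b) (pderiv (p.succ, a) (tauSymbol n m)))) (elemT u)) := by
    rw [tauMultilinear_apply, tau_eq_sum_tauSymbol n (hdeg p), Finset.mul_sum]
    refine Finset.sum_congr rfl fun m _ => ?_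
    rw [elemT_insertNth, embA, map_mul (rename _), rename_X, rename_X, mul_assoc,
      constantCoeff_diffOp_X_mul, constantCoeff_diffOp_X_mul, constantCoeff_diffOp_rename,
      mul_left_comm,
      show ((-1) ^ p.1 : Tens n (2 * n)) = C ((-1) ^ p.1) by rw [C_pow, C_neg, C_1],
      diffOp_mul_apply, diffOp_C, constantCoeff_smul, smul_eq_mul]
  simp only [hterm]
  rw [Finset.sum_comm]
  refine Finset.sum_eq_zero fun m _ => ?_
  rw [← Finset.mul_sum, ← map_sum, ← LinearMap.sum_apply, ← map_sum,
    sum_symbolPullback_pderiv_pderiv_tauSymbol, map_zero, LinearMap.zero_apply, map_zero, mul_zero]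

theorem tauMultilinear_insertNth_C (p : Fin (2 * n)) (c : Kc) (u : Fin (2 * n) → Apol n) :
    tauMultilinear n (p.succ.insertNth (C c) u : Fin (2 * n + 1) → Apol n) = 0 := by
  rw [tauMultilinear_apply, tau_eq_sum_tauSymbol n (Nat.lt_succ_self _)]
  refine Finset.sum_eq_zero fun m _ => ?_
  rw [elemT_insertNth, embA, rename_C, ← smul_eq_C_mul, map_smul, constantCoeff_smul,
    constantCoeff_diffOp_rename, tauSymbol, map_mul, symbolPullback_tailDet_genericCovector,
    zero_mul, map_zero, LinearMap.zero_apply, map_zero, smul_zero, mul_zero]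

end Slot

section AlternatingInsertion

variable {R M : Type*} [CommRing R] [AddCommGroup M] [Module R M] {k : ℕ}

/-- The alternating sum of the values of `T` on the words obtained from `u` by inserting one
further letter in any position but the first, as a linear form in that letter. -/
def alternatingInsertion (T : MultilinearMap R (fun _ : Fin (k + 1) => M) R) (u : Fin k → M) :
    M →ₗ[R] R where
  toFun z := ∑ p : Fin k, (-1) ^ p.1 * T (p.succ.insertNth z u : Fin (k + 1) → M)
  map_add' z z' := by
    simp only [T.map_insertNth_add, mul_add, Finset.sum_add_distrib]
  map_smul' c z := by
    simp only [T.map_insertNth_smul, mul_smul_comm, Finset.smul_sum, RingHom.id_apply]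

lemma alternatingInsertion_apply (T : MultilinearMap R (fun _ : Fin (k + 1) => M) R)
    (u : Fin k → M) (z : M) : alternatingInsertion T u z =
      ∑ p : Fin k, (-1) ^ p.1 * T (p.succ.insertNth z u : Fin (k + 1) → M) :=
  rfl

lemma tailAlternatization_eq_zero_of_alternatingInsertion
    {T : MultilinearMap R (fun _ : Fin (k + 1) => M) R} {v : Fin k → M} {i : Fin k}
    (h : ∀ u, alternatingInsertion T u (v i) = 0) (w : M) : tailAlternatization T w v = 0 := by
  cases k with
  | zero => exact i.elim0
  | succ k =>
    rw [tailAlternatization_apply, antisymmetrizeTail, antisymmetrization_eq_sum_of_argument _ _ i,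
      ← antisymmetrization_sum_mul, antisymmetrization]
    refine Finset.sum_eq_zero fun σ _ => ?_
    have hword := h (Fin.cons w ((v ∘ i.succAbove) ∘ σ))
    simp only [alternatingInsertion_apply, Fin.insertNth_succ_cons] at hword
    simp only [pow_add, mul_assoc]
    rw [← Finset.mul_sum, hword, mul_zero, smul_zero]

lemma sum_apply_insertNth_diagonal {N : ℕ}
    (T : MultilinearMap R (fun _ : Fin (k + 2) => M) R) (q : Fin (k + 2)) (a : M)
    (u : Fin (k + 1) → Matrix (Fin N) (Fin N) M) :
    ∑ r : Fin (k + 2) → Fin N, T (fun c =>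
      (q.insertNth (Matrix.diagonal fun _ => a) u : Fin (k + 2) → Matrix (Fin N) (Fin N) M) c
        (r c) (r (c + 1))) =
      ∑ s : Fin (k + 1) → Fin N, T (q.insertNth a fun c => u c (s c) (s (c + 1))) := by
  rw [← Equiv.sum_comp (insertIndexEquiv q), Fintype.sum_prod_type]
  refine Finset.sum_congr rfl fun s _ => ?_
  have hat (l : Fin N) : insertIndexEquiv q (s, l) q = s (mergeIndex q q) :=
    Function.update_of_ne (self_ne_add_one q) _ _
  have hnext (l : Fin N) : insertIndexEquiv q (s, l) (q + 1) = l :=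
    Function.update_self _ _ _
  rw [Finset.sum_eq_single (s (mergeIndex q q))]
  · have hword : insertIndexEquiv q (s, s (mergeIndex q q)) = s ∘ mergeIndex q := by
      refine Function.update_eq_iff.2 ⟨?_, fun _ _ => rfl⟩
      rw [Function.comp, mergeIndex_add_one_self]
    congr 1
    funext c
    cases c using Fin.succAboveCases q with
    | x =>
      rw [hat, hnext, Fin.insertNth_apply_same, Fin.insertNth_apply_same, Matrix.diagonal_apply_eq]
    | p c =>
      rw [Fin.insertNth_apply_succAbove, Fin.insertNth_apply_succAbove, hword, Function.comp,
        Function.comp, mergeIndex_add_one (Fin.succAbove_ne q c), mergeIndex_succAbove]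
  · intro l _ hl
    refine T.map_coord_zero q ?_
    rw [Fin.insertNth_apply_same, hat, hnext, Matrix.diagonal_apply_ne _ hl.symm]
  · exact fun h => absurd (Finset.mem_univ _) h

end AlternatingInsertion

section Vanishing

variable {n N : ℕ}

lemma alternatingInsertion_tauMultilinear_of_mem_spSub {a : Apol n} (ha : a ∈ spSub n)
    (u : Fin (2 * n) → Apol n) : alternatingInsertion (tauMultilinear n) u a = 0 := by
  induction ha using Submodule.span_induction with
  | mem x hx =>
    obtain ⟨i, j, rfl⟩ := hx
    exact sum_tauMultilinear_insertNth_X_mul_X i j u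
  | zero => exact map_zero _
  | add x y _ _ hx hy => rw [map_add, hx, hy, add_zero]
  | smul s x _ hx => rw [← algebraMap_smul Kc s x, map_smul, hx, smul_zero]

lemma alternatingInsertion_tauMatrix_diagonal {a : Apol n} (ha : a ∈ spSub n)
    (u : Fin (2 * n) → glA n N) :
    alternatingInsertion (tauMatrix n N) u (Matrix.diagonal fun _ => a) = 0 := by
  cases n with
  | zero => rfl
  | succ n =>
    simp only [alternatingInsertion_apply, tauMatrix_apply]
    have hcollapse (p : Fin (2 * (n + 1))) := sum_apply_insertNth_diagonal (k := 2 * n + 1) (N := N)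
      (tauMultilinear (n + 1)) p.succ a u
    refine (Finset.sum_congr rfl fun p _ => (congrArg _ (hcollapse p)).trans
      (Finset.mul_sum _ _ _)).trans ?_
    rw [Finset.sum_comm]
    exact Finset.sum_eq_zero fun s _ => alternatingInsertion_tauMultilinear_of_mem_spSub ha _

lemma tauMatrix_insertNth_map_algebraMap (A : Matrix (Fin N) (Fin N) ℂ) (p : Fin (2 * n))
    (u : Fin (2 * n) → glA n N) :
    tauMatrix n N (p.succ.insertNth (A.map (algebraMap ℂ (Apol n))) u :
      Fin (2 * n + 1) → glA n N) = 0 := by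
  rw [tauMatrix_apply]
  refine Finset.sum_eq_zero fun r _ => ?_
  rw [← tauMultilinear_insertNth_C p (algebraMap ℂ Kc (A (r p.succ) (r (p.succ + 1))))
    fun c => u c (r (p.succ.succAbove c)) (r (p.succ.succAbove c + 1))]
  congr 1
  funext c
  cases c using Fin.succAboveCases p.succ with
  | x => rw [Fin.insertNth_apply_same, Fin.insertNth_apply_same]; rfl
  | p c => rw [Fin.insertNth_apply_succAbove, Fin.insertNth_apply_succAbove]

lemma alternatingInsertion_tauMatrix_of_mem_hK {Z : glA n N} (hZ : Z ∈ hK n N)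
    (u : Fin (2 * n) → glA n N) : alternatingInsertion (tauMatrix n N) u Z = 0 := by
  induction hZ using Submodule.span_induction with
  | mem Z hZ =>
    rcases hZ with ⟨A, rfl⟩ | ⟨a, ha, rfl⟩
    · rw [alternatingInsertion_apply]
      simp only [tauMatrix_insertNth_map_algebraMap, mul_zero, Finset.sum_const_zero]
    · exact alternatingInsertion_tauMatrix_diagonal ha u
  | zero => exact map_zero _
  | add x y _ _ hx hy => rw [map_add, hx, hy, add_zero]
  | smul s x _ hx => rw [map_smul, hx, smul_zero]

theorem Theta_eq_zero_of_mem_hK (v : Fin (2 * n) → glA n N) (i : Fin (2 * n)) (w : glA n N)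
    (hv : v i ∈ hK n N) : Theta n N v w = 0 := by
  rw [Theta_eq_tailAlternatization]
  exact tailAlternatization_eq_zero_of_alternatingInsertion
    (alternatingInsertion_tauMatrix_of_mem_hK hv) w

end Vanishing

/-! ### Invariance under `gl_N ⊕ sp_{2n}` -/

section Cartan

variable {n N k : ℕ}

lemma pairTuple_cons_zero_succ {G : Type*} (Z b : G) (v : Fin (k + 1) → G) (j : Fin (k + 1)) :
    pairTuple (k + 1) (Fin.cons Z v : Fin (k + 2) → G) b 0 j.succ =
      Fin.cons b (v ∘ j.succAbove) := by
  have h := cons_comp_succAbove_succAbove (Fin.cons Z v : Fin (k + 2) → G) b 0 j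
  rw [Fin.succAbove_zero, min_eq_left (Fin.zero_le _), max_eq_right (Fin.zero_le _)] at h
  exact h.symm

lemma map_pairTuple_cons_zero_succ {R M : Type*} [CommRing R] [AddCommGroup M] [Module R M]
    (f : M [⋀^Fin k]→ₗ[R] R) (Z b : M) (v : Fin k → M) (j : Fin k) :
    f (pairTuple k (Fin.cons Z v : Fin (k + 1) → M) b 0 j.succ) =
      (-1) ^ j.1 * f (Function.update v j b) := by
  cases k with
  | zero => exact j.elim0
  | succ k =>
    have hupdate : Function.update v j b = j.insertNth b (v ∘ j.succAbove) :=
      (Fin.insertNth_removeNth j b v).symm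
    rw [pairTuple_cons_zero_succ, hupdate]
    exact (f.neg_one_pow_smul_map_insertNth j b (v ∘ j.succAbove)).symm.trans (by simp)

/-- Cartan's formula `ι_Z d = -L_Z` for a cochain that vanishes as soon as one of its arguments
is `Z`. -/
lemma dCoadj_cons (Φ : glA n N →ₗ[Kc] glA n N [⋀^Fin k]→ₗ[Kc] Kc) {Z : glA n N}
    (hZ : ∀ w v i, v i = Z → Φ w v = 0) (v : Fin k → glA n N) (w : glA n N) :
    dCoadj n N k (fun v w => Φ w v) (Fin.cons Z v) w =
      -((∑ i : Fin k, Φ w (Function.update v i (glBr n N Z (v i)))) + Φ (glBr n N Z w) v) := by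
  have hsingle (i : Fin k) (b : glA n N) :
      Φ b ((Fin.cons Z v : Fin (k + 1) → glA n N) ∘ i.succ.succAbove) = 0 := by
    have hzero : i.succ.succAbove ⟨0, i.pos⟩ = 0 := by
      simp [Fin.succAbove, Fin.lt_def]
    exact hZ _ _ ⟨0, i.pos⟩ (by rw [Function.comp, hzero, Fin.cons_zero])
  have hpair (i : Fin k) (l : Fin (k + 1)) (hil : i.succ < l) (b : glA n N) :
      Φ w (pairTuple k (Fin.cons Z v : Fin (k + 1) → glA n N) b i.succ l) = 0 := by
    have hk : 1 < k := by
      have := l.2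
      simp only [Fin.lt_def, Fin.val_succ] at hil
      omega
    refine hZ _ _ ⟨1, hk⟩ ?_
    simp [pairTuple]
  have hrow (i : Fin k) : (∑ l : Fin (k + 1), if i.succ < l then
      (-1 : Kc) ^ (i.succ.1 + l.1) • Φ w (pairTuple k (Fin.cons Z v : Fin (k + 1) → glA n N)
        (glBr n N ((Fin.cons Z v : Fin (k + 1) → glA n N) i.succ)
          ((Fin.cons Z v : Fin (k + 1) → glA n N) l)) i.succ l) else 0) = 0 :=
    Finset.sum_eq_zero fun l _ => by
      split_ifs with hil
      · rw [hpair i l hil, smul_zero]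
      · rfl
  have hsign (j : Fin k) : (-1 : Kc) ^ j.succ.1 * (-1) ^ j.1 = -1 := by
    rw [Fin.val_succ, pow_succ, mul_right_comm, ← mul_pow, neg_mul_neg, one_mul, one_pow, one_mul]
  have hfirst : (Fin.cons Z v : Fin (k + 1) → glA n N) ∘ (0 : Fin (k + 1)).succAbove = v := by
    rw [Fin.succAbove_zero]
    rfl
  rw [dCoadj, Fin.sum_univ_succ]
  simp only [hsingle, smul_zero, Finset.sum_const_zero, add_zero, hfirst]
  rw [Fin.sum_univ_succ]
  simp only [hrow, Finset.sum_const_zero, add_zero]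
  rw [Fin.sum_univ_succ]
  simp only [lt_irrefl, if_false, Fin.succ_pos, if_true, map_pairTuple_cons_zero_succ,
    Fin.cons_zero, Fin.cons_succ, smul_eq_mul, ← mul_assoc, Fin.val_zero, hsign, zero_add, pow_one,
    neg_one_mul, Finset.sum_neg_distrib, neg_add_rev]
theorem sum_Theta_update_glBr_add (Z : glA n N) (hZ : Z ∈ hK n N) (v : Fin (2 * n) → glA n N)
    (w : glA n N) :
    (∑ i : Fin (2 * n), Theta n N (Function.update v i (glBr n N Z (v i))) w) +
      Theta n N v (glBr n N Z w) = 0 := by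
  have hTheta : Theta n N = fun v w => tailAlternatization (tauMatrix n N) w v := by
    funext v w
    exact Theta_eq_tailAlternatization n N v w
  have hclosed := dCoadj_Theta n N (Fin.cons Z v) w
  rw [hTheta, dCoadj_cons _ fun w v i hi => ?_, neg_eq_zero] at hclosed
  · rwa [hTheta]
  · rw [← Theta_eq_tailAlternatization]
    exact Theta_eq_zero_of_mem_hK v i w (hi ▸ hZ)

end Cartan

/-! ### Nontriviality -/

section MoyalLinear

variable {n k : ℕ}

lemma alphaOp_apply_eq_zero {i j c : Fin k} (hc : c = i ∨ c = j) {a : Tens n k}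
    (ha : ∀ v, pderiv (c, v) a = 0) : alphaOp n k i j a = 0 := by
  have hzero (u v : Fin (2 * n)) : pderiv (i, u) (pderiv (j, v) a) = 0 := by
    rcases hc with rfl | rfl
    · rw [pderiv_pderiv_comm, ha, map_zero]
    · rw [ha, map_zero]
  simp [alphaOp, Dop, hzero]

lemma expEps_eq_self {f : Module.End Kc (Tens n k)} {a : Tens n k} (hf : f a = 0) :
    expEps f a = a := by
  rw [expEps, Finset.sum_range_succ', Finset.sum_eq_zero fun m _ => by
    rw [pow_succ f, Module.End.mul_apply, hf, map_zero, smul_zero]]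
  simp

lemma moyal_one_right (f : Apol n) : moyal n f 1 = f := by
  have htensor : elemT ![f, 1] = embA n 2 0 f := by simp [elemT]
  rw [moyal, htensor, expEps_eq_self (alphaOp_apply_eq_zero (c := 1) (Or.inr rfl) fun v =>
    pderiv_embA_of_ne one_ne_zero v f), embA, aeval_rename]
  exact aeval_X_left_apply f

lemma moyal_one_left (f : Apol n) : moyal n 1 f = f := by
  have htensor : elemT ![1, f] = embA n 2 1 f := by simp [elemT]
  rw [moyal, htensor, expEps_eq_self (alphaOp_apply_eq_zero (c := 0) (Or.inl rfl) fun v =>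
    pderiv_embA_of_ne zero_ne_one v f), embA, aeval_rename]
  exact aeval_X_left_apply f

lemma moyal_zero_left (f : Apol n) : moyal n 0 f = 0 := by
  simp [moyal, elemT, expEps]

lemma moyal_zero_right (f : Apol n) : moyal n f 0 = 0 := by
  simp [moyal, elemT, expEps]

lemma pderiv_pderiv_X_mul_X (a b u v : Fin (2 * n)) :
    pderiv (0, u) (pderiv (1, v) (X ((0 : Fin 2), a) * X (1, b) : Tens n 2)) =
      C ((Pi.single a 1 : Fin (2 * n) → Kc) u * (Pi.single b 1 : Fin (2 * n) → Kc) v) := by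
  simp only [Derivation.leibniz, pderiv_X, Pi.single_apply, Prod.mk.injEq, zero_ne_one, false_and,
    true_and, if_false, smul_eq_mul, eq_comm (a := u), eq_comm (a := v)]
  split_ifs <;> simp_all

lemma alphaOp_X_mul_X (a b : Fin (2 * n)) :
    alphaOp n 2 0 1 (X (0, a) * X (1, b)) =
      C (symplecticForm (Pi.single a 1) (Pi.single b 1)) := by
  simp only [alphaOp, Dop, LinearMap.smul_apply, LinearMap.sum_apply, LinearMap.sub_apply,
    Module.End.mul_apply, Derivation.coeFn_coe,
    pderiv_pderiv_X_mul_X, ← map_sub, ← map_sum]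
  rw [symplecticForm_apply, smul_eq_C_mul, ← C_mul, ← algebraMap_smul Kc (1 / 2 : ℝ), smul_eq_mul,
    IsScalarTower.algebraMap_apply ℝ ℂ Kc]
  simp

lemma moyal_X_X (a b : Fin (2 * n)) :
    moyal n (X a) (X b) =
      X a * X b + C (eps * symplecticForm (Pi.single a 1) (Pi.single b 1)) := by
  have htensor : elemT ![(X a : Apol n), X b] = X (0, a) * X (1, b) := by simp [elemT, embA]
  have hdegree : (X (0, a) * X (1, b) : Tens n 2).totalDegree = 2 := by
    rw [totalDegree_mul_of_isDomain (X_ne_zero _) (X_ne_zero _), totalDegree_X, totalDegree_X]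
  have halpha_C (c : Kc) : alphaOp n 2 0 1 (C c) = 0 :=
    alphaOp_apply_eq_zero (Or.inl rfl) fun v => pderiv_C
  rw [moyal, htensor, expEps, hdegree]
  simp [Finset.sum_range_succ, pow_two, alphaOp_X_mul_X, halpha_C, smul_eq_C_mul]

end MoyalLinear

section DiagonalMatrices

variable {n N : ℕ}

lemma matMul_diagonal (f g : Apol n) :
    matMul n N (Matrix.diagonal fun _ => f) (Matrix.diagonal fun _ => g) =
      Matrix.diagonal fun _ => moyal n f g := by
  ext1 i j
  rw [matMul, Finset.sum_eq_single i]
  · rcases eq_or_ne i j with rfl | hij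
    · simp only [Matrix.diagonal_apply_eq]
    · rw [Matrix.diagonal_apply_ne _ hij, Matrix.diagonal_apply_ne _ hij, moyal_zero_right]
  · intro l _ hl
    rw [Matrix.diagonal_apply_ne _ hl.symm, moyal_zero_left]
  · simp

lemma glBr_diagonal_one (f : Apol n) : glBr n N (Matrix.diagonal fun _ => f) 1 = 0 := by
  rw [glBr, ← Matrix.diagonal_one, matMul_diagonal, matMul_diagonal, moyal_one_left,
    moyal_one_right, sub_self, smul_zero]

lemma diagonal_C_mem_hK (c : Kc) : Matrix.diagonal (fun _ => C c) ∈ hK n N := by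
  have hone : (1 : glA n N) ∈ hK n N :=
    Submodule.subset_span (Or.inl ⟨1, (Matrix.map_one _ (map_zero _) (map_one _)).symm⟩)
  have hsmul : (Matrix.diagonal fun _ => C c : glA n N) = c • 1 := by
    rw [← Matrix.diagonal_one, ← Matrix.diagonal_smul]
    simp [Pi.smul_def, smul_eq_C_mul]
  exact hsmul ▸ Submodule.smul_mem _ c hone

lemma glBr_diagonal_X_mem_hK (a b : Fin (2 * n)) :
    glBr n N (Matrix.diagonal fun _ => X a) (Matrix.diagonal fun _ => X b) ∈ hK n N := by
  rw [glBr, matMul_diagonal, matMul_diagonal, moyal_X_X, moyal_X_X, Matrix.diagonal_sub]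
  simp only [mul_comm (X b), add_sub_add_left_eq_sub, ← C_sub]
  exact Submodule.smul_mem _ _ (diagonal_C_mem_hK _)

/-- Brackets of linear elements are constants, hence lie in the subalgebra where relative cochains
vanish, and the unit is central. -/
theorem apply_diagonal_X_one_eq_zero_of_isRelCoadjCobd {k : ℕ}
    {c : (Fin k → glA n N) → glA n N → Kc} (hc : IsRelCoadjCobd n N k c)
    (g : Fin k → Fin (2 * n)) : c (fun m => Matrix.diagonal fun _ => X (g m)) 1 = 0 := by
  cases k with
  | zero => exact congrFun₂ (show c = 0 from hc) _ _
  | succ k =>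
    obtain ⟨b, ⟨-, -, -, hsmul, -, hvanish, -⟩, rfl⟩ := hc
    have hzero (v : Fin k → glA n N) : b v 0 = 0 := by
      simpa using hsmul v 0 0
    have hpair {i l : Fin (k + 1)} (hil : i < l) (v : Fin (k + 1) → glA n N) {Z : glA n N}
        (hZ : Z ∈ hK n N) : b (pairTuple k v Z i l) 1 = 0 := by
      refine hvanish _ ⟨0, ?_⟩ 1 ?_
      · have := l.2
        rw [Fin.lt_def] at hil
        omega
      · simpa only [pairTuple, dif_pos] using hZ
    simp only [dCoadj, glBr_diagonal_one, hzero, smul_zero, Finset.sum_const_zero, zero_add]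
    refine Finset.sum_eq_zero fun i _ => Finset.sum_eq_zero fun l _ =>
      ite_eq_right_iff.2 fun hil => ?_
    rw [hpair hil _ (glBr_diagonal_X_mem_hK _ _), smul_zero]

lemma tauMatrix_diagonal (a : Fin (2 * n + 1) → Apol n) :
    tauMatrix n N (fun c => Matrix.diagonal fun _ => a c) = N * tauMultilinear n a := by
  rw [tauMatrix_apply, ← Fintype.sum_of_injective (fun (i : Fin N) (_ : Fin (2 * n + 1)) => i)
    (fun _ _ h => congrFun h 0) (fun _ => tauMultilinear n a)]
  · simp
  · intro r hr
    obtain ⟨c, hc⟩ : ∃ c, r c ≠ r (c + 1) := by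
      by_contra! hconst
      refine hr ⟨r 0, funext fun c => ?_⟩
      induction c using Fin.induction with
      | zero => rfl
      | succ c ih => rw [ih, hconst c.castSucc, Fin.coeSucc_eq_succ]
    exact (tauMultilinear n).map_coord_zero c (Matrix.diagonal_apply_ne _ hc)
  · simp

end DiagonalMatrices

section Normalization

variable {n : ℕ}

lemma diffOp_tailDet_prod_X (σ : Equiv.Perm (Fin (2 * n))) :
    diffOp (tailDet (genericCovector n (2 * n + 1))) (∏ m : Fin (2 * n), X (m.succ, σ m)) =
      Equiv.Perm.sign σ • 1 := by
  have hterm (ρ : Equiv.Perm (Fin (2 * n))) :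
      diffOp (∏ m : Fin (2 * n), X (m.succ, ρ m)) (∏ m : Fin (2 * n), X (m.succ, σ m)) =
        (if ρ = σ then 1 else 0 : Tens n (2 * n + 1)) := by
    rw [diffOp_prod_X_prod_X (Fin.succ_injective _)]
    simp [Equiv.ext_iff]
  rw [tailDet, ← Matrix.det_transpose, Matrix.det_apply, map_sum, LinearMap.sum_apply,
    Finset.sum_eq_single σ]
  · rw [Units.smul_def, map_zsmul, LinearMap.smul_apply]
    exact congrArg _ ((hterm σ).trans (if_pos rfl))
  · intro ρ _ hρ
    rw [Units.smul_def, map_zsmul, LinearMap.smul_apply]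
    exact (congrArg _ ((hterm ρ).trans (if_neg hρ))).trans (smul_zero _)
  · simp

lemma constantCoeff_expIntegral_genericCovector (m : ℕ) :
    constantCoeff (expIntegral m (genericCovector n (2 * n + 1))) =
      if m = 0 then algebraMap ℝ Kc ((2 * n).factorial : ℝ)⁻¹ else 0 := by
  cases m with
  | zero =>
    rw [expIntegral, pow_zero, simplexIntegral_one, Nat.factorial_zero, Nat.cast_one, inv_one,
      one_smul, if_pos rfl]
    exact constantCoeff_C _ _
  | succ m =>
    rw [if_neg m.succ_ne_zero, ← C_inj (σ := Fin (2 * n + 1) × Fin (2 * n)), ← diffOp_one_right,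
      C_0]
    exact diffOp_eq_zero_of_totalDegree_lt (expIntegral_genericCovector_mem n (m + 1)) (by simp)

lemma tau_prod_X (σ : Equiv.Perm (Fin (2 * n))) :
    tau n (∏ m : Fin (2 * n), X (m.succ, σ m)) =
      Equiv.Perm.sign σ • algebraMap ℝ Kc ((2 * n).factorial : ℝ)⁻¹ := by
  have hterm (m : ℕ) :
      constantCoeff (diffOp (tauSymbol n m) (∏ m : Fin (2 * n), X (m.succ, σ m))) =
        Equiv.Perm.sign σ •
          if m = 0 then algebraMap ℝ Kc ((2 * n).factorial : ℝ)⁻¹ else 0 := by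
    rw [tauSymbol, mul_comm (tailDet _), diffOp_mul_apply, diffOp_tailDet_prod_X, Units.smul_def,
      map_zsmul, diffOp_one_right, map_zsmul, constantCoeff_C,
      constantCoeff_expIntegral_genericCovector]
    rfl
  rw [tau_eq_sum_tauSymbol n (Nat.lt_succ_self _), Finset.sum_range_succ']
  simp only [hterm]
  simp

theorem Theta_diagonal_X_one (n N : ℕ) :
    Theta n N (fun m => Matrix.diagonal fun _ => X m) 1 = N := by
  have hterm (σ : Equiv.Perm (Fin (2 * n))) :
      Equiv.Perm.sign σ • tauMatrix n N (Fin.cons 1 fun m => Matrix.diagonal fun _ => X (σ m)) =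
        N * algebraMap ℝ Kc ((2 * n).factorial : ℝ)⁻¹ := by
    have hcons : (Fin.cons 1 fun m => Matrix.diagonal fun _ => X (σ m) :
        Fin (2 * n + 1) → glA n N) =
          fun c => Matrix.diagonal fun _ => (Fin.cons 1 fun m => X (σ m) : _ → Apol n) c := by
      funext c
      cases c using Fin.cases <;> simp
    have htensor : elemT (Fin.cons 1 fun m => X (σ m) : Fin (2 * n + 1) → Apol n) =
        ∏ m : Fin (2 * n), X (m.succ, σ m) := by
      simp [elemT, embA, Fin.prod_univ_succ]
    rw [hcons, tauMatrix_diagonal, tauMultilinear_apply, htensor, tau_prod_X, mul_smul_comm,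
      smul_smul, Int.units_mul_self, one_smul]
  have hfactorial :
      ((2 * n).factorial : Kc) * algebraMap ℝ Kc ((2 * n).factorial : ℝ)⁻¹ = 1 := by
    rw [← map_natCast (algebraMap ℝ Kc), ← map_mul,
      mul_inv_cancel₀ (Nat.cast_ne_zero.2 (Nat.factorial_ne_zero _)), map_one]
  rw [Theta_eq_tailAlternatization, tailAlternatization_apply, antisymmetrizeTail,
    antisymmetrization]
  refine (Finset.sum_congr rfl fun σ _ => hterm σ).trans ?_
  rw [Finset.sum_const, Finset.card_univ, Fintype.card_perm, Fintype.card_fin, nsmul_eq_mul,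
    mul_left_comm, hfactorial, mul_one]

end Normalization

/-- `Θ^N_{2n}` is a cocycle in the relative Lie algebra cochain complex
`C^{2n}(gl_N(A^pol_{2n}), gl_N ⊕ sp_{2n}; gl_N(A^pol_{2n})^*)`: it is invariant under the
adjoint action of `gl_N ⊕ sp_{2n}`, vanishes whenever one of its arguments lies in
`gl_N ⊕ sp_{2n}`, is closed, and its cohomology class is nonzero; moreover
`Θ^N_{2n}(p_1∧q_1∧⋯∧p_n∧q_n)(1) = N`. -/
theorem Theta_relative_cocycle (n N : ℕ) (hN : 1 ≤ N) :
    -- h-invariance: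
    (∀ Z ∈ hK n N, ∀ (v : Fin (2*n) → glA n N) (w : glA n N),
      (∑ i : Fin (2*n), Theta n N (Function.update v i (glBr n N Z (v i))) w)
        + Theta n N v (glBr n N Z w) = 0) ∧
    -- vanishing on h:
    (∀ (v : Fin (2*n) → glA n N) (i : Fin (2*n)) (w : glA n N),
      v i ∈ hK n N → Theta n N v w = 0) ∧
    -- cocycle:
    (∀ (v : Fin (2*n+1) → glA n N) (w : glA n N), dCoadj n N (2*n) (Theta n N) v w = 0) ∧
    -- nontrivial class:
    ¬ IsRelCoadjCobd n N (2*n) (Theta n N) ∧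
    -- normalization:
    Theta n N (fun m : Fin (2*n) => Matrix.diagonal (fun _ => (X m : Apol n))) 1 = (N : Kc)
    := by
  refine ⟨sum_Theta_update_glBr_add, Theta_eq_zero_of_mem_hK, dCoadj_Theta n N,
    fun hcobd => ?_, Theta_diagonal_X_one n N⟩
  have hzero : (N : Kc) = 0 := (Theta_diagonal_X_one n N).symm.trans
    (apply_diagonal_X_one_eq_zero_of_isRelCoadjCobd hcobd id)
  rw [← map_natCast (algebraMap ℂ Kc), FaithfulSMul.algebraMap_eq_zero_iff, Nat.cast_eq_zero]
    at hzero
  omega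

end
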